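/- arXiv:2211.03953 — 2 statements merged into one kernel-verified Lean document; each statement's English description precedes it below -/
import Mathlib

section
/- Let P be a finite (3+1)-free poset with |P| = n and λ/μ/d a cylindric shape with |λ/μ| = n. Writing s_{λ/μ/d}(x) = Σ_ν a_ν m_ν(x) and X_{inc(P)}(x) = Σ_{ν ⊢ n} c^P_ν e_ν(x), the linear combination Σ_ν a_ν c^P_ν equals the number of standard cylindric P-tableaux of shape λ/μ/d, i.e., cylindric P-tableaux containing each element of P exactly once. In particular Σ_ν a_ν c^P_ν ≥ 0. -/
open MvPolynomial
open scoped Classical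

noncomputable section

/-- A poset is `(3+1)`-free: no induced subposet consisting of a 3-chain
together with an element incomparable to all of it. -/
def ThreePlusOneFree (P : Type*) [PartialOrder P] : Prop :=
  ¬ ∃ a b c x : P, a < b ∧ b < c ∧
    ¬(x ≤ a ∨ a ≤ x) ∧ ¬(x ≤ b ∨ b ≤ x) ∧ ¬(x ≤ c ∨ c ≤ x)

/-- The `P`-elementary function `e_k^P(u)`, the sum of `u_{i_1} ⋯ u_{i_k}`
over strict chains `i_1 <_P ⋯ <_P i_k`. -/
def eP (P : Type*) [Fintype P] [PartialOrder P] (k : ℕ) : MvPolynomial P ℤ :=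
  ∑ f ∈ Finset.univ.filter (fun f : Fin k → P => ∀ a b : Fin k, a < b → f a < f b),
    ∏ i, X (f i)

/-- `e_k^P` for an integer index, vanishing for negative `k`. -/
def ePz (P : Type*) [Fintype P] [PartialOrder P] (k : ℤ) : MvPolynomial P ℤ :=
  if 0 ≤ k then eP P k.toNat else 0

/-- Conjugate partition: `conj f c` is the length of column `c` (0-indexed)
of the diagram of `f`. -/
def conj (f : ℕ → ℕ) (c : ℕ) : ℕ := Set.ncard {i | c < f i}

/-- `f : ℕ → ℕ` (0-indexed list of parts) is a partition. -/
def IsPartition (f : ℕ → ℕ) : Prop := (∀ i, f (i + 1) ≤ f i) ∧ ∃ N, ∀ i, N ≤ i → f i = 0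

/-- `λ/μ/d` is a cylindric shape. -/
def IsCylShape (lam mu : ℕ → ℕ) (d : ℕ) : Prop :=
  IsPartition lam ∧ IsPartition mu ∧ (∀ i, mu i ≤ lam i) ∧ 0 < lam 0 ∧
    conj lam 0 ≤ conj lam (lam 0 - 1) + d ∧
    conj mu 0 ≤ conj mu (lam 0 - 1) + d ∧ d ≤ conj lam 0

section Arrays
variable {P : Type*} [PartialOrder P]

/-- Column-strictness of the array `A` (a total function; only values on the cells
of the shape `col(α,β)`, over `l` columns, matter): entries strictly increase
down each column. This is the defining condition for a `P`-array. -/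
def ColStrict (A : ℕ → ℕ → P) (l : ℕ) (α β : ℕ → ℕ) : Prop :=
  ∀ c r r', c < l → β c ≤ r → r < r' → r' < α c → A r c < A r' c

/-- `col(α,β)` (with `β` a partition) is a skew partition shape. -/
def IsSkewShape (l : ℕ) (α β : ℕ → ℕ) : Prop :=
  (∀ c, c + 1 < l → α (c + 1) ≤ α c ∧ β (c + 1) ≤ β c) ∧ ∀ c, c < l → β c ≤ α c

/-- Rows of `A` are weakly increasing in `P`: no entry is `>_P` its right neighbour. -/
def RowWeak (A : ℕ → ℕ → P) (l : ℕ) (α β : ℕ → ℕ) : Prop :=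
  ∀ r c, c + 1 < l → β c ≤ r → r < α c → β (c + 1) ≤ r → r < α (c + 1) →
    ¬ A r (c + 1) < A r c

/-- `A` is a `P`-tableau of shape `col(α,β)`. -/
def IsPTableau (A : ℕ → ℕ → P) (l : ℕ) (α β : ℕ → ℕ) : Prop :=
  IsSkewShape l α β ∧ ColStrict A l α β ∧ RowWeak A l α β

/-- The glued array `A^d`: columns `0,…,l-1` of `A` shifted down by `d`, and a copy
of column `0` of `A` as the extra column `l`. -/
def glueArr (A : ℕ → ℕ → P) (l d : ℕ) : ℕ → ℕ → P :=
  fun r c => if c < l then A (r - d) c else A r 0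

/-- Column lengths of the glued shape. -/
def glueCol (f : ℕ → ℕ) (l d : ℕ) : ℕ → ℕ :=
  fun c => if c < l then f c + d else f 0

/-- `(r,j)` is an intersection point of columns `i < j` of `A`
(shape `col(α,β)`), with witness in column `i`. -/
def IsIntPoint (A : ℕ → ℕ → P) (α β : ℕ → ℕ) (i j r : ℕ) : Prop :=
  i < j ∧ β j ≤ r ∧ r < α j ∧
    ∃ w, w + j = r + 1 + i ∧ β i ≤ w ∧ (α i ≤ w ∨ A r j < A w i)

/-- Columns `i < j` of `A` intersect. -/
def Intersecting (A : ℕ → ℕ → P) (α β : ℕ → ℕ) (i j : ℕ) : Prop :=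
  ∃ r, IsIntPoint A α β i j r

/-- `(r,j)` is a `P`-minimal intersection point of the array `A` with columns `0,…,L`. -/
def PMinIP (A : ℕ → ℕ → P) (α β : ℕ → ℕ) (L j r : ℕ) : Prop :=
  j ≤ L ∧ (∃ i, IsIntPoint A α β i j r) ∧
    ∀ j' r' i', j' ≤ L → IsIntPoint A α β i' j' r' → ¬ A r' j' < A r j

/-- `(r,j)` is the rightmost `P`-minimal intersection point. -/
def RightmostPMinIP (A : ℕ → ℕ → P) (α β : ℕ → ℕ) (L j r : ℕ) : Prop :=
  PMinIP A α β L j r ∧ ∀ j' r', PMinIP A α β L j' r' → j' ≤ j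

/-- The cylindric swap `swap(A,i,j,d)` at the `P`-minimal intersection point `m` of
columns `i < j ≤ l` of `A^d` (the minimal intersection point is the lowest-row one,
since column `j` is a chain).  Everything is in the coordinates of `A`; the case
`j = l` is the wrap-around case, where entries move between column `i` and column `0`. -/
def swapArr (A : ℕ → ℕ → P) (l d i j : ℕ) (α β : ℕ → ℕ) : ℕ → ℕ → P :=
  let m := sInf {r | IsIntPoint (glueArr A l d) (glueCol α l d) (glueCol β l d) i j r}
  if j < l then
    fun r c =>
      if c = i ∧ m + 1 + i ≤ r + j + d then A (r + (j - i)) j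
      else if c = j ∧ m + 1 ≤ r + d then A (r - (j - i)) i
      else A r c
  else
    fun r c =>
      if c = i ∧ m + 1 + i ≤ r + j + d then A (r + (j - i) + d) 0
      else if c = 0 ∧ m + 1 ≤ r then A (r - (d + (j - i))) i
      else A r c

end Arrays

/-- A cylindric `P`-tableau of shape `λ/μ/d`, encoded column by column:
`T c p` is the entry of column `c` in the `p`-th cell from the top
(global row `conj μ c + p`).  The condition is that the glued filling `T^d`
is a `P`-tableau: the glued shape is a skew shape, columns strictly increase
in `P`, and rows (including the wrap-around adjacency between the last column
and the copy of column `0` shifted up by `d`) weakly increase in `P`. -/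
def IsCylTab {P : Type*} [PartialOrder P] (lam mu : ℕ → ℕ) (d : ℕ)
    (T : ∀ c : Fin (lam 0), Fin (conj lam c - conj mu c) → P) : Prop :=
  (∀ c, c + 1 < lam 0 → conj lam (c + 1) ≤ conj lam c ∧ conj mu (c + 1) ≤ conj mu c) ∧
  (∀ c, c < lam 0 → conj mu c ≤ conj lam c) ∧
  (0 < lam 0 → conj lam 0 ≤ conj lam (lam 0 - 1) + d ∧ conj mu 0 ≤ conj mu (lam 0 - 1) + d) ∧
  (∀ c p q, p < q → T c p < T c q) ∧
  (∀ (c : Fin (lam 0)) (hc : c.1 + 1 < lam 0)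
      (p : Fin (conj lam c.1 - conj mu c.1)) (q : Fin (conj lam (c.1 + 1) - conj mu (c.1 + 1))),
      conj mu c.1 + p.1 = conj mu (c.1 + 1) + q.1 → ¬ T ⟨c.1 + 1, hc⟩ q < T c p) ∧
  (∀ (h0 : 0 < lam 0) (p : Fin (conj lam (lam 0 - 1) - conj mu (lam 0 - 1)))
      (q : Fin (conj lam 0 - conj mu 0)),
      conj mu (lam 0 - 1) + p.1 + d = conj mu 0 + q.1 →
      ¬ T ⟨0, h0⟩ q < T ⟨lam 0 - 1, Nat.sub_lt h0 Nat.one_pos⟩ p)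

/-- The `u`-monomial weight `u^T` of a tableau. -/
def uT {P : Type*} (lam mu : ℕ → ℕ)
    (T : ∀ c : Fin (lam 0), Fin (conj lam c - conj mu c) → P) : MvPolynomial P ℤ :=
  ∏ c, ∏ p, X (T c p)

/-- Number of occurrences of the value `x` in the tableau `T`. -/
def tabCount {P : Type*} (lam mu : ℕ → ℕ)
    (T : ∀ c : Fin (lam 0), Fin (conj lam c - conj mu c) → P) (x : P) : ℕ :=
  ∑ c, (Finset.univ.filter (fun p => T c p = x)).card

/-- `T` is standard: it contains each element of `P` exactly once. -/
def IsStandardTab {P : Type*} (lam mu : ℕ → ℕ)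
    (T : ∀ c : Fin (lam 0), Fin (conj lam c - conj mu c) → P) : Prop :=
  ∀ x : P, tabCount lam mu T x = 1

/-- The chromatic symmetric polynomial of the incomparability graph `inc(P)`,
in the variables `x_0, …, x_{N-1}`. -/
def chromPoly (P : Type*) [Fintype P] [PartialOrder P] (N : ℕ) : MvPolynomial (Fin N) ℤ :=
  ∑ κ ∈ Finset.univ.filter
      (fun κ : P → Fin N => ∀ a b : P, a ≠ b → ¬(a ≤ b ∨ b ≤ a) → κ a ≠ κ b),
    ∏ v, X (κ v)

end

set_option linter.unusedSectionVars false

section CoreProof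
variable {Q : Type*} [PartialOrder Q] {l : ℕ}

theorem three_chain (h31 : ThreePlusOneFree Q) {a b c s : Q} (hab : a < b) (hbc : b < c)
    (h1 : ¬ s < c) (h2 : ¬ a < s) : False := by
  apply h31
  refine ⟨a, b, c, s, hab, hbc, ?_, ?_, ?_⟩
  · rintro (h | h)
    · exact h1 (h.trans_lt (hab.trans hbc))
    · rcases h.lt_or_eq with h | h
      · exact h2 h
      · exact h1 (h ▸ hab.trans hbc)
  · rintro (h | h)
    · exact h1 (h.trans_lt hbc)
    · exact h2 (hab.trans_le h)
  · rintro (h | h)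
    · rcases h.lt_or_eq with h | h
      · exact h1 h
      · exact h2 (h ▸ hab.trans hbc)
    · exact h2 ((hab.trans hbc).trans_le h)

structure FD (Q : Type*) (l : ℕ) where
  i : Fin l
  j : Fin l
  w : ℕ
  r : ℕ
  t : Q

def Flaw (b : Fin l → ℤ) (D : ℤ) (L : Fin l → List Q) (φ : FD Q l) : Prop :=
  φ.w ≤ φ.r ∧ (D ∣ (b φ.i + φ.w) - (b φ.j + φ.r + 1)) ∧ (L φ.j)[φ.r]? = some φ.t ∧
    ∀ z, (L φ.i)[φ.w]? = some z → φ.t < z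

def fkey (ρ : Q → ℕ) (φ : FD Q l) : ℕ := ρ φ.t * l + φ.j.1

theorem fkey_rho {ρ : Q → ℕ} {φ ψ : FD Q l} (h : fkey ρ φ ≤ fkey ρ ψ) : ρ φ.t ≤ ρ ψ.t := by
  by_contra hc
  have h1 : ρ ψ.t + 1 ≤ ρ φ.t := by omega
  have h2 := Nat.mul_le_mul_right l h1
  have := ψ.j.2
  have := φ.j.2
  unfold fkey at h
  rw [Nat.add_mul] at h2
  omega

theorem fkey_eq {ρ : Q → ℕ} {φ ψ : FD Q l} (h : fkey ρ φ = fkey ρ ψ) :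
    ρ φ.t = ρ ψ.t ∧ φ.j = ψ.j := by
  have h1 : ρ φ.t = ρ ψ.t := le_antisymm (fkey_rho h.le) (fkey_rho h.ge)
  refine ⟨h1, ?_⟩
  unfold fkey at h
  rw [h1] at h
  exact Fin.ext (by omega)

theorem fkey_lt {ρ : Q → ℕ} {φ ψ : FD Q l} (h : ρ φ.t < ρ ψ.t) : fkey ρ φ < fkey ρ ψ := by
  by_contra hc
  have := fkey_rho (not_lt.1 hc)
  omega

def MinFlaw (ρ : Q → ℕ) (b : Fin l → ℤ) (D : ℤ) (L : Fin l → List Q) (φ : FD Q l) : Prop :=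
  Flaw b D L φ ∧ ∀ ψ, Flaw b D L ψ → fkey ρ φ ≤ fkey ρ ψ

def swapL (L : Fin l → List Q) (φ : FD Q l) : Fin l → List Q := fun c =>
  if c = φ.i then (L φ.i).take φ.w ++ (L φ.j).drop (φ.r + 1)
  else if c = φ.j then (L φ.j).take (φ.r + 1) ++ (L φ.i).drop φ.w
  else L c

def ChainL (L : Fin l → List Q) : Prop := ∀ c, (L c).Pairwise (· < ·)

theorem ChainL.lt {L : Fin l → List Q} (hL : ChainL L) {c : Fin l} {m m' : ℕ} {x y : Q}
    (hx : (L c)[m]? = some x) (hy : (L c)[m']? = some y) (h : m < m') : x < y := by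
  obtain ⟨h1, rfl⟩ := List.getElem?_eq_some_iff.1 hx
  obtain ⟨h2, rfl⟩ := List.getElem?_eq_some_iff.1 hy
  exact List.pairwise_iff_getElem.1 (hL c) _ _ h1 h2 h

theorem ChainL.le {L : Fin l → List Q} (hL : ChainL L) {c : Fin l} {m m' : ℕ} {x y : Q}
    (hx : (L c)[m]? = some x) (hy : (L c)[m']? = some y) (h : m ≤ m') : x ≤ y := by
  rcases h.lt_or_eq with h | h
  · exact (hL.lt hx hy h).le
  · subst h
    rw [hx] at hy
    exact (Option.some.inj hy).le

theorem exists_get {L : List Q} {m m' : ℕ} {y : Q} (hy : L[m']? = some y) (h : m ≤ m') :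
    ∃ x, L[m]? = some x := by
  obtain ⟨h2, -⟩ := List.getElem?_eq_some_iff.1 hy
  exact ⟨L[m]'(by omega), List.getElem?_eq_getElem (by omega)⟩

theorem Flaw.ne {b : Fin l → ℤ} {D : ℤ} {L : Fin l → List Q} {φ : FD Q l}
    (hL : ChainL L) (h : Flaw b D L φ) : φ.i ≠ φ.j := by
  intro hij
  obtain ⟨h1, h2, h3, h4⟩ := h
  rw [hij] at h4
  obtain ⟨z, hz⟩ := exists_get h3 h1
  have := h4 z hz
  have := hL.le hz h3 h1
  exact absurd (lt_of_lt_of_le (h4 z hz) this) (lt_irrefl _)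

section sw
variable {L : Fin l → List Q} {φ : FD Q l}

theorem swap_i_lt (hw : φ.w ≤ (L φ.i).length) {m : ℕ} (hm : m < φ.w) :
    (swapL L φ φ.i)[m]? = (L φ.i)[m]? := by
  simp only [swapL, if_true]
  rw [List.getElem?_append_left (by simp; omega), List.getElem?_take, if_pos hm]

theorem swap_i_ge (hw : φ.w ≤ (L φ.i).length) {m : ℕ} (hm : φ.w ≤ m) :
    (swapL L φ φ.i)[m]? = (L φ.j)[m - φ.w + (φ.r + 1)]? := by
  simp only [swapL, if_true]
  rw [List.getElem?_append_right (by simp; omega), List.getElem?_drop]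
  congr 1
  simp
  omega

theorem swap_j_lt (hij : φ.i ≠ φ.j) (hr : φ.r < (L φ.j).length) {m : ℕ} (hm : m ≤ φ.r) :
    (swapL L φ φ.j)[m]? = (L φ.j)[m]? := by
  simp only [swapL, if_true, if_neg hij.symm]
  rw [List.getElem?_append_left (by simp; omega), List.getElem?_take, if_pos (by omega)]

theorem swap_j_ge (hij : φ.i ≠ φ.j) (hr : φ.r < (L φ.j).length) {m : ℕ} (hm : φ.r + 1 ≤ m) :
    (swapL L φ φ.j)[m]? = (L φ.i)[m - (φ.r + 1) + φ.w]? := by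
  simp only [swapL, if_true, if_neg hij.symm]
  rw [List.getElem?_append_right (by simp; omega), List.getElem?_drop]
  congr 1
  simp
  omega

theorem swap_other {c : Fin l} (h1 : c ≠ φ.i) (h2 : c ≠ φ.j) : swapL L φ c = L c := by
  simp [swapL, h1, h2]

theorem swap_swap (hij : φ.i ≠ φ.j) (hw : φ.w ≤ (L φ.i).length) (hr : φ.r < (L φ.j).length) :
    swapL (swapL L φ) φ = L := by
  funext c
  apply List.ext_getElem?
  intro m
  have hw' : φ.w ≤ (swapL L φ φ.i).length := by
    simp [swapL]; omega
  have hr' : φ.r < (swapL L φ φ.j).length := by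
    simp [swapL, hij.symm]; omega
  by_cases h1 : c = φ.i
  · subst h1
    rcases lt_or_ge m φ.w with h | h
    · rw [swap_i_lt hw' h, swap_i_lt hw h]
    · rw [swap_i_ge hw' h, swap_j_ge hij hr (by omega)]
      congr 1; omega
  by_cases h2 : c = φ.j
  · subst h2
    rcases lt_or_ge φ.r m with h | h
    · rw [swap_j_ge hij hr' (by omega), swap_i_ge hw (by omega)]
      congr 1; omega
    · rw [swap_j_lt hij hr' h, swap_j_lt hij hr h]
  rw [swap_other h1 h2, swap_other h1 h2]

end sw

variable {ρ : Q → ℕ} {b : Fin l → ℤ} {D : ℤ} {L : Fin l → List Q} {φ : FD Q l}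

theorem Flaw.r_lt (h : Flaw b D L φ) : φ.r < (L φ.j).length :=
  (List.getElem?_eq_some_iff.1 h.2.2.1).1

theorem MinFlaw.prev (hρ : StrictMono ρ) (hL : ChainL L) (h : MinFlaw ρ b D L φ) (hw : 0 < φ.w) :
    ∃ x y, (L φ.i)[φ.w - 1]? = some x ∧ (L φ.j)[φ.r - 1]? = some y ∧ ¬ y < x := by
  obtain ⟨⟨h1, h2, h3, h4⟩, h5⟩ := h
  obtain ⟨y, hy⟩ := exists_get h3 (Nat.sub_le φ.r 1)
  have hyt : y < φ.t := hL.lt hy h3 (by omega)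
  have hnf : ¬ Flaw b D L ⟨φ.i, φ.j, φ.w - 1, φ.r - 1, y⟩ := by
    intro hf
    have := h5 _ hf
    have h6 := fkey_lt (φ := (⟨φ.i, φ.j, φ.w - 1, φ.r - 1, y⟩ : FD Q l)) (ψ := φ) (hρ hyt)
    omega
  by_contra hc
  push Not at hc
  apply hnf
  refine ⟨by simp only; omega, ?_, hy, fun z hz => hc z y hz hy⟩
  simp only
  have e1 : ((φ.w - 1 : ℕ) : ℤ) = φ.w - 1 := by omega
  have e2 : ((φ.r - 1 : ℕ) : ℤ) = φ.r - 1 := by omega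
  rw [e1, e2]
  convert h2 using 1
  ring

theorem MinFlaw.w_le (hρ : StrictMono ρ) (hL : ChainL L) (h : MinFlaw ρ b D L φ) :
    φ.w ≤ (L φ.i).length := by
  rcases Nat.eq_zero_or_pos φ.w with h0 | h0
  · omega
  obtain ⟨x, y, hx, -, -⟩ := h.prev hρ hL h0
  have := (List.getElem?_eq_some_iff.1 hx).1
  omega

theorem MinFlaw.chain (h31 : ThreePlusOneFree Q) (hρ : StrictMono ρ) (hL : ChainL L)
    (h : MinFlaw ρ b D L φ) : ChainL (swapL L φ) := by
  have hij := h.1.ne hL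
  have hw := h.w_le hρ hL
  have hr := h.1.r_lt
  have key : ∀ (c : Fin l) (m m' : ℕ) (x y : Q), m < m' → (swapL L φ c)[m]? = some x → (swapL L φ c)[m']? = some y →
      x < y := by
    intro c m m' x y hm hx hy
    by_cases h1 : c = φ.i
    · subst h1
      rcases lt_or_ge m' φ.w with h' | h'
      · rw [swap_i_lt hw h'] at hy
        rw [swap_i_lt hw (by omega)] at hx
        exact hL.lt hx hy hm
      rw [swap_i_ge hw h'] at hy
      rcases lt_or_ge m φ.w with h'' | h''
      · rw [swap_i_lt hw h''] at hx
        obtain ⟨x', y', hx', hy', hn⟩ := h.prev hρ hL (by omega)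
        have hle : x ≤ x' := hL.le hx hx' (by omega)
        by_contra hc
        have hc' : ¬ x' < y := fun hh => hc (hle.trans_lt hh)
        have hwr := h.1.1
        exact three_chain h31 (hL.lt hy' h.1.2.2.1 (by omega)) (hL.lt h.1.2.2.1 hy (by omega)) hc' hn
      · rw [swap_i_ge hw h''] at hx
        exact hL.lt hx hy (by omega)
    by_cases h2 : c = φ.j
    · subst h2
      rcases lt_or_ge φ.r m' with h' | h'
      · rw [swap_j_ge hij hr (by omega)] at hy
        rcases lt_or_ge φ.r m with h'' | h''
        · rw [swap_j_ge hij hr (by omega)] at hx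
          exact hL.lt hx hy (by omega)
        · rw [swap_j_lt hij hr h''] at hx
          obtain ⟨z, hz⟩ := exists_get hy (show φ.w ≤ _ from Nat.le_add_left _ _)
          exact (hL.le hx h.1.2.2.1 h'').trans_lt ((h.1.2.2.2 z hz).trans_le (hL.le hz hy (by omega)))
      · rw [swap_j_lt hij hr h'] at hy
        rw [swap_j_lt hij hr (by omega)] at hx
        exact hL.lt hx hy hm
    · rw [swap_other h1 h2] at hx hy
      exact hL.lt hx hy hm
  intro c
  rw [List.pairwise_iff_getElem]
  intro m m' h1 h2 hm
  exact key c m m' _ _ hm (List.getElem?_eq_getElem h1) (List.getElem?_eq_getElem h2)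

/-- The element of a low flaw of the swapped array is unmoved. -/
theorem MinFlaw.unmoved (hρ : StrictMono ρ) (hL : ChainL L) (h : MinFlaw ρ b D L φ)
    {c : Fin l} {s : ℕ} {x : Q} (hx : (swapL L φ c)[s]? = some x) (hk : ρ x ≤ ρ φ.t) :
    (L c)[s]? = some x ∧ (c = φ.j → s ≤ φ.r) := by
  have hij := h.1.ne hL
  have hw := h.w_le hρ hL
  have hr := h.1.r_lt
  by_cases h1 : c = φ.i
  · subst h1
    refine ⟨?_, fun e => absurd e hij⟩
    rcases lt_or_ge s φ.w with h' | h'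
    · rwa [swap_i_lt hw h'] at hx
    · rw [swap_i_ge hw h'] at hx
      have := hρ (hL.lt h.1.2.2.1 hx (by omega))
      omega
  by_cases h2 : c = φ.j
  · subst h2
    rcases lt_or_ge φ.r s with h' | h'
    · rw [swap_j_ge hij hr (by omega)] at hx
      obtain ⟨z, hz⟩ := exists_get hx (show φ.w ≤ _ from Nat.le_add_left _ _)
      have := hρ ((h.1.2.2.2 z hz).trans_le (hL.le hz hx (by omega)))
      omega
    · rw [swap_j_lt hij hr h'] at hx
      exact ⟨hx, fun _ => h'⟩
  · rw [swap_other h1 h2] at hx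
    exact ⟨hx, fun e => absurd e h2⟩

theorem MinFlaw.flaw_back (h31 : ThreePlusOneFree Q) (hρ : StrictMono ρ)
    (hb : ∀ i j, D ∣ b i - b j → i = j) (hL : ChainL L)
    (h : MinFlaw ρ b D L φ) {ψ : FD Q l} (hψ : Flaw b D (swapL L φ) ψ)
    (hk : fkey ρ ψ ≤ fkey ρ φ) : Flaw b D L ψ := by
  have hij := h.1.ne hL
  have hw := h.w_le hρ hL
  have hr := h.1.r_lt
  have hρk := fkey_rho hk
  obtain ⟨p, q, v, s, σ⟩ := ψ
  obtain ⟨g1, g2, g3, g4⟩ := hψ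
  simp only at g1 g2 g3 g4 hρk
  obtain ⟨g5, g6⟩ := h.unmoved hρ hL g3 hρk
  -- equal key forces the same cell
  have hkeq : fkey ρ φ ≤ fkey ρ (⟨p, q, v, s, σ⟩ : FD Q l) → q = φ.j ∧ s = φ.r := by
    intro hk'
    obtain ⟨k1, k2⟩ := fkey_eq (le_antisymm hk hk')
    simp only at k1 k2
    refine ⟨k2, ?_⟩
    subst k2
    rcases lt_trichotomy s φ.r with hs | hs | hs
    · have := hρ (hL.lt g5 h.1.2.2.1 hs)
      omega
    · exact hs
    · exact absurd (g6 rfl) (by omega)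
  have hflawkey : ∀ p' v', Flaw b D L ⟨p', q, v', s, σ⟩ → q = φ.j ∧ s = φ.r := by
    intro p' v' hf
    have h6 := h.2 ⟨p', q, v', s, σ⟩ hf
    exact hkeq h6
  obtain ⟨f1, f2, f3, f4⟩ := h.1
  by_contra hnf
  have : ∃ z, (L p)[v]? = some z ∧ ¬ σ < z := by
    by_contra hc
    push Not at hc
    exact hnf ⟨g1, g2, g5, hc⟩
  obtain ⟨z, hz, hσz⟩ := this
  by_cases h2 : p = φ.j
  · subst h2
    rcases lt_or_ge φ.r v with h' | h'
    · have := hflawkey φ.i (v - (φ.r + 1) + φ.w) ⟨by simp only; omega, by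
        simp only
        have e1 : ((v - (φ.r + 1) + φ.w : ℕ) : ℤ) = v - (φ.r + 1) + φ.w := by omega
        rw [e1]
        convert Int.dvd_add f2 g2 using 1
        ring, g5, by
        intro z' hz'
        apply g4
        rw [swap_j_ge hij hr (by omega)]
        exact hz'⟩
      omega
    · rw [swap_j_lt hij hr h'] at g4
      exact hσz (g4 z hz)
  by_cases h1 : p = φ.i
  swap
  · rw [swap_other h1 h2] at g4
    exact hσz (g4 z hz)
  subst h1
  rcases lt_or_ge v φ.w with h' | h'
  · rw [swap_i_lt hw h'] at g4
    exact hσz (g4 z hz)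
  rw [swap_i_ge hw h'] at g4
  have hdv : D ∣ (b q + s + 1) - (b φ.j + φ.r + 1 + v - φ.w) := by
    convert Int.dvd_sub f2 g2 using 1
    ring
  by_cases hsv : v - φ.w + (φ.r + 1) ≤ s
  · have := hflawkey φ.j (v - φ.w + (φ.r + 1)) ⟨hsv, by
        simp only
        have e1 : ((v - φ.w + (φ.r + 1) : ℕ) : ℤ) = v - φ.w + (φ.r + 1) := by omega
        rw [e1, ← Int.dvd_neg]
        convert hdv using 1
        ring, g5, g4⟩
    omega
  rcases h'.lt_or_eq with h' | h'
  · -- v > w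
    obtain ⟨z0, hz0⟩ := exists_get hz h'.le
    refine three_chain h31 (f4 z0 hz0) (hL.lt hz0 hz h') hσz ?_
    intro hlt
    have := hρ hlt
    omega
  · -- v = w
    subst h'
    have hsr : s ≤ φ.r := by omega
    rcases hsr.lt_or_eq with hsr | hsr
    · obtain ⟨y, hy⟩ := exists_get f3 (Nat.sub_le φ.r 1)
      have hyt : y < φ.t := hL.lt hy f3 (by omega)
      refine three_chain h31 hyt (f4 z hz) hσz ?_
      intro hlt
      have hf : Flaw b D L ⟨q, φ.j, s, φ.r - 1, y⟩ := by
        refine ⟨by simp only; omega, ?_, hy, ?_⟩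
        · simp only
          have e2 : ((φ.r - 1 : ℕ) : ℤ) = φ.r - 1 := by omega
          rw [e2]
          convert hdv using 1
          ring
        · intro z' hz'
          simp only at hz' ⊢
          rw [g5] at hz'
          exact (Option.some.inj hz') ▸ hlt
      have := h.2 _ hf
      have h6 := fkey_lt (φ := (⟨q, φ.j, s, φ.r - 1, y⟩ : FD Q l)) (ψ := φ) (hρ hyt)
      omega
    · subst hsr
      have : q = φ.j := hb _ _ (by convert hdv using 1; ring)
      subst this
      rw [f3] at g5
      exact hσz ((Option.some.inj g5) ▸ f4 z hz)

theorem MinFlaw.swap (h31 : ThreePlusOneFree Q) (hρ : StrictMono ρ)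
    (hb : ∀ i j, D ∣ b i - b j → i = j) (hL : ChainL L)
    (h : MinFlaw ρ b D L φ) : MinFlaw ρ b D (swapL L φ) φ := by
  have hij := h.1.ne hL
  have hw := h.w_le hρ hL
  have hr := h.1.r_lt
  obtain ⟨f1, f2, f3, f4⟩ := h.1
  refine ⟨⟨f1, f2, ?_, ?_⟩, ?_⟩
  · rwa [swap_j_lt hij hr le_rfl]
  · intro z hz
    rw [swap_i_ge hw le_rfl] at hz
    exact hL.lt f3 hz (by omega)
  · intro ψ hψ
    by_contra hc
    have := h.2 _ (h.flaw_back h31 hρ hb hL hψ (by omega))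
    omega

theorem MinFlaw.sub (h31 : ThreePlusOneFree Q) (hρ : StrictMono ρ)
    (hb : ∀ i j, D ∣ b i - b j → i = j) (hL : ChainL L)
    (h : MinFlaw ρ b D L φ) {ψ : FD Q l} (hψ : MinFlaw ρ b D (swapL L φ) ψ) :
    MinFlaw ρ b D L ψ := by
  have hk := hψ.2 _ (h.swap h31 hρ hb hL).1
  exact ⟨h.flaw_back h31 hρ hb hL hψ.1 hk, fun χ hχ => hk.trans (h.2 _ hχ)⟩

theorem MinFlaw.set_eq (h31 : ThreePlusOneFree Q) (hρ : StrictMono ρ)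
    (hb : ∀ i j, D ∣ b i - b j → i = j) (hL : ChainL L)
    (h : MinFlaw ρ b D L φ) :
    {ψ | MinFlaw ρ b D (swapL L φ) ψ} = {ψ | MinFlaw ρ b D L ψ} := by
  apply Set.Subset.antisymm
  · intro ψ hψ
    exact h.sub h31 hρ hb hL hψ
  · intro ψ hψ
    have h' := h.swap h31 hρ hb hL
    have hL' := h.chain h31 hρ hL
    refine h'.sub h31 hρ hb hL' ?_
    rw [swap_swap (h.1.ne hL) (h.w_le hρ hL) h.1.r_lt]
    exact hψ

theorem exists_minFlaw (h : ∃ φ, Flaw b D L φ) : ∃ φ, MinFlaw ρ b D L φ := by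
  have hs : {φ | Flaw b D L φ}.Nonempty := h
  obtain ⟨φ, h1, h2⟩ := WellFounded.has_min (measure (fkey (Q := Q) (l := l) ρ)).wf _ hs
  exact ⟨φ, h1, fun ψ hψ => not_lt.1 (h2 ψ hψ)⟩

end CoreProof
section SumProof
variable {Q : Type*} [Fintype Q] [PartialOrder Q] {l : ℕ}

def Good (b a : Fin l → ℤ) (D : ℤ) (f : Q → ℕ)
    (s : (Fin l → List Q) × Equiv.Perm (Fin l)) : Prop :=
  ChainL s.1 ∧ (∀ c, D ∣ b c + (s.1 c).length - a (s.2 c)) ∧ ∀ q, ∑ c, (s.1 c).count q = f q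

theorem chainL_finite : {L : Fin l → List Q | ChainL L}.Finite := by
  refine (Set.Finite.pi (t := fun _ : Fin l => {L : List Q | L.length ≤ Fintype.card Q})
    (fun _ => List.finite_length_le Q _)).subset ?_
  intro L hL c _
  have : (L c).Nodup := (hL c).imp (fun h => h.ne)
  exact this.length_le_card

theorem good_finite (b a : Fin l → ℤ) (D : ℤ) (f : Q → ℕ) : {s | Good b a D f s}.Finite := by
  refine (Set.Finite.prod (chainL_finite (Q := Q) (l := l))
    (Set.finite_univ (α := Equiv.Perm (Fin l)))).subset ?_
  intro s hs
  exact ⟨hs.1, Set.mem_univ _⟩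

theorem exists_rho : ∃ ρ : Q → ℕ, StrictMono ρ := by
  refine ⟨fun x => (Finset.univ.filter (· < x)).card, ?_⟩
  intro x y hxy
  apply Finset.card_lt_card
  rw [Finset.ssubset_iff_of_subset]
  · exact ⟨x, by simpa using hxy, by simp⟩
  · intro z hz
    simp only [Finset.mem_filter, Finset.mem_univ, true_and] at hz ⊢
    exact hz.trans hxy

theorem some_congr {α : Type*} (S S' : Set α) (h : S.Nonempty) (h' : S'.Nonempty) (e : S = S') :
    h.some = h'.some := by
  subst e; rfl

theorem sum_two {M : Type*} [AddCommMonoid M] {i j : Fin l} (hij : i ≠ j) (F G : Fin l → M)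
    (h : F i + F j = G i + G j) (ho : ∀ c, c ≠ i → c ≠ j → F c = G c) :
    ∑ c, F c = ∑ c, G c := by
  have hj : j ∈ Finset.univ.erase i := by simp [hij.symm]
  rw [← Finset.add_sum_erase _ _ (Finset.mem_univ i), ← Finset.add_sum_erase _ _ hj,
    ← Finset.add_sum_erase _ G (Finset.mem_univ i), ← Finset.add_sum_erase _ G hj,
    ← add_assoc, ← add_assoc, h]
  congr 1
  apply Finset.sum_congr rfl
  intro c hc
  simp only [Finset.mem_erase, Finset.mem_univ, and_true] at hc
  exact ho c hc.2 hc.1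

theorem MinFlaw.good (h31 : ThreePlusOneFree Q) {ρ : Q → ℕ} (hρ : StrictMono ρ)
    {b a : Fin l → ℤ} {D : ℤ} {f : Q → ℕ} {s : (Fin l → List Q) × Equiv.Perm (Fin l)}
    (hs : Good b a D f s) {φ : FD Q l} (h : MinFlaw ρ b D s.1 φ) :
    Good b a D f (swapL s.1 φ, s.2 * Equiv.swap φ.i φ.j) := by
  have hij := h.1.ne hs.1
  have hw := h.w_le hρ hs.1
  have hr := h.1.r_lt
  refine ⟨h.chain h31 hρ hs.1, ?_, ?_⟩
  · intro c
    simp only [Equiv.Perm.mul_apply]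
    have h2 := h.1.2.1
    by_cases h1 : c = φ.i
    · subst h1
      rw [Equiv.swap_apply_left]
      have e : ((swapL s.1 φ φ.i).length : ℤ) = φ.w + (s.1 φ.j).length - (φ.r + 1) := by
        simp [swapL]; omega
      rw [e]
      convert Int.dvd_add h2 (hs.2.1 φ.j) using 1
      ring
    by_cases h3 : c = φ.j
    · subst h3
      rw [Equiv.swap_apply_right]
      have e : ((swapL s.1 φ φ.j).length : ℤ) = φ.r + 1 + (s.1 φ.i).length - φ.w := by
        simp [swapL, hij.symm]; omega
      rw [e]
      convert Int.dvd_sub (hs.2.1 φ.i) h2 using 1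
      ring
    · rw [Equiv.swap_apply_of_ne_of_ne h1 h3, swap_other h1 h3]
      exact hs.2.1 c
  · intro q
    rw [← hs.2.2 q]
    refine sum_two hij _ _ ?_ ?_
    · have e1 : (s.1 φ.i).count q = ((s.1 φ.i).take φ.w).count q + ((s.1 φ.i).drop φ.w).count q := by
        rw [← List.count_append, List.take_append_drop]
      have e2 : (s.1 φ.j).count q = ((s.1 φ.j).take (φ.r + 1)).count q
          + ((s.1 φ.j).drop (φ.r + 1)).count q := by
        rw [← List.count_append, List.take_append_drop]
      rw [e1, e2]
      simp only [swapL, if_true, if_neg hij.symm, List.count_append]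
      omega
    · intro c h1 h2
      simp only [swap_other h1 h2]

theorem core_sum (h31 : ThreePlusOneFree Q) (b a : Fin l → ℤ) (D : ℤ) (f : Q → ℕ)
    (hb : ∀ i j, D ∣ b i - b j → i = j)
    (hfix : ∀ s, Good b a D f s → (¬ ∃ φ, Flaw b D s.1 φ) → s.2 = 1) :
    ∑ s ∈ (good_finite b a D f).toFinset, ((Equiv.Perm.sign s.2 : ℤˣ) : ℤ)
      = Nat.card {s // Good b a D f s ∧ ¬ ∃ φ, Flaw b D s.1 φ} := by
  obtain ⟨ρ, hρ⟩ := exists_rho (Q := Q)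
  rw [← Finset.sum_filter_add_sum_filter_not _ (fun s => ∃ φ, Flaw b D s.1 φ)]
  have hz : ∑ s ∈ (good_finite b a D f).toFinset with ∃ φ, Flaw b D s.1 φ,
      ((Equiv.Perm.sign s.2 : ℤˣ) : ℤ) = 0 := by
    have hne : ∀ s ∈ (good_finite b a D f).toFinset.filter (fun s => ∃ φ, Flaw b D s.1 φ),
        Good b a D f s ∧ {φ | MinFlaw ρ b D s.1 φ}.Nonempty := by
      intro s hs
      simp only [Finset.mem_filter, Set.Finite.mem_toFinset, Set.mem_ofPred_eq] at hs
      exact ⟨hs.1, exists_minFlaw hs.2⟩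
    refine Finset.sum_involution
      (fun s hs => (swapL s.1 (hne s hs).2.some,
        s.2 * Equiv.swap (hne s hs).2.some.i (hne s hs).2.some.j)) ?_ ?_ ?_ ?_
    · intro s hs
      have hm : MinFlaw ρ b D s.1 _ := (hne s hs).2.some_mem
      have hij := hm.1.ne (hne s hs).1.1
      simp [Equiv.Perm.sign_swap hij]
    · intro s hs _ he
      have hm : MinFlaw ρ b D s.1 _ := (hne s hs).2.some_mem
      have hij := hm.1.ne (hne s hs).1.1
      have h2 := congrArg Prod.snd he
      simp only [mul_eq_left] at h2
      exact hij (Equiv.swap_eq_one_iff.1 h2)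
    · intro s hs
      have hm : MinFlaw ρ b D s.1 _ := (hne s hs).2.some_mem
      simp only [Finset.mem_filter, Set.Finite.mem_toFinset, Set.mem_ofPred_eq]
      exact ⟨hm.good h31 hρ (hne s hs).1, _, (hm.swap h31 hρ hb (hne s hs).1.1).1⟩
    · intro s hs
      have hg := (hne s hs).1
      have hm : MinFlaw ρ b D s.1 _ := (hne s hs).2.some_mem
      have hse := hm.set_eq h31 hρ hb hg.1
      have hso := some_congr _ _ (hse.symm ▸ (hne s hs).2) (hne s hs).2 hse
      simp only [hso]
      rw [swap_swap (hm.1.ne hg.1) (hm.w_le hρ hg.1) hm.1.r_lt, mul_assoc, Equiv.swap_mul_self,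
        mul_one]
  rw [hz, zero_add]
  have h1 : ∀ s ∈ (good_finite b a D f).toFinset.filter (fun s => ¬ ∃ φ, Flaw b D s.1 φ),
      ((Equiv.Perm.sign s.2 : ℤˣ) : ℤ) = 1 := by
    intro s hs
    simp only [Finset.mem_filter, Set.Finite.mem_toFinset, Set.mem_ofPred_eq] at hs
    rw [hfix s hs.1 hs.2]
    simp
  rw [Finset.sum_congr rfl h1, Finset.sum_const, nsmul_eq_mul, mul_one]
  congr 1
  rw [← Nat.card_eq_finsetCard]
  apply Nat.card_congr
  apply Equiv.subtypeEquivRight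
  intro s
  simp

/-- Flawless arrays have the standard ends. -/
theorem noflaw_ends {b a : Fin l → ℤ} {D : ℤ} {s : (Fin l → List Q) × Equiv.Perm (Fin l)}
    (hD : 0 < D)
    (hb : StrictAnti b) (ha : StrictAnti a) (hbD : ∀ i j, b i - b j < D) (haD : ∀ i j, a i - a j < D)
    (hs : ∀ c, D ∣ b c + (s.1 c).length - a (s.2 c))
    (hsum : ∑ c, (b c + (s.1 c).length) = ∑ c, a c)
    (hnf : ¬ ∃ φ, Flaw b D s.1 φ) :
    s.2 = 1 ∧ ∀ c, b c + (s.1 c).length = a c := by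
  set e : Fin l → ℤ := fun c => b c + (s.1 c).length with he
  -- general flaw criterion
  have crit : ∀ i j (B : ℤ), D ∣ b j - B → B < b i → B + (s.1 j).length < e i := by
    intro i j B hB hlt
    by_contra hc
    push Not at hc
    apply hnf
    have hr : (e i - 1 - B).toNat < (s.1 j).length := by
      simp only [he] at *
      omega
    refine ⟨⟨i, j, (s.1 i).length, (e i - 1 - B).toNat, (s.1 j)[(e i - 1 - B).toNat]⟩, ?_, ?_, ?_, ?_⟩
    · simp only [he] at *
      omega
    · simp only
      have : ((e i - 1 - B).toNat : ℤ) = e i - 1 - B := by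
        simp only [he] at *
        omega
      rw [this]
      simp only [he]
      rw [← Int.dvd_neg]
      convert hB using 1
      ring
    · exact List.getElem?_eq_getElem hr
    · intro z hz
      simp at hz
  have heD : ∀ i j, e j - e i < D := by
    intro i j
    have := crit i j (b j - D) ⟨1, by ring⟩ (by have := hbD j i; omega)
    simp only [he] at *
    omega
  have hea : StrictAnti e := by
    intro i j hij
    have := crit i j (b j) ⟨0, by ring⟩ (hb hij)
    simpa [he] using this
  choose k hk using hs
  have hk' : ∀ c, e c = a (s.2 c) + D * k c := fun c => by
    have := hk c
    simp only [he]
    omega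
  have hk0 : ∑ c, k c = 0 := by
    have h1 : ∑ c, e c = ∑ c, a (s.2 c) + D * ∑ c, k c := by
      rw [Finset.mul_sum, ← Finset.sum_add_distrib]
      exact Finset.sum_congr rfl (fun c _ => hk' c)
    rw [Equiv.sum_comp s.2 a, hsum] at h1
    have : D * ∑ c, k c = 0 := by linarith
    rcases mul_eq_zero.1 this with h | h
    · omega
    · exact h
  have hdiff : ∀ c c', k c - k c' ≤ 1 := by
    intro c c'
    by_contra hc
    have h1 := heD c' c
    have h2 := haD (s.2 c') (s.2 c)
    rw [hk' c, hk' c'] at h1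
    have h3 : 2 ≤ k c - k c' := by omega
    nlinarith
  have hkz : ∀ c, k c = 0 := by
    intro c
    rcases lt_trichotomy (k c) 0 with h | h | h
    · have : ∑ c, k c < ∑ c : Fin l, (0 : ℤ) :=
        Finset.sum_lt_sum (fun c' _ => by have := hdiff c' c; omega) ⟨c, Finset.mem_univ _, h⟩
      simp at this; omega
    · exact h
    · have : ∑ c : Fin l, (0 : ℤ) < ∑ c, k c :=
        Finset.sum_lt_sum (fun c' _ => by have := hdiff c c'; omega) ⟨c, Finset.mem_univ _, h⟩
      simp at this; omega
  have hπm : StrictMono s.2 := by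
    intro i j hij
    have := hea hij
    rw [hk', hk', hkz, hkz] at this
    exact ha.lt_iff_gt.1 (by linarith)
  have hπ : s.2 = 1 := by
    ext c
    have := (StrictMono.range_inj hπm strictMono_id).1 (by simp [s.2.surjective.range_eq])
    rw [this]; rfl
  refine ⟨hπ, fun c => ?_⟩
  have := hk' c
  rw [hkz, hπ] at this
  simpa [he] using this

end SumProof
section TabProof

theorem conj_anti {f : ℕ → ℕ} (hf : IsPartition f) {c c' : ℕ} (h : c ≤ c') : conj f c' ≤ conj f c := by
  obtain ⟨-, N, hN⟩ := hf
  refine Set.ncard_le_ncard (fun i hi => lt_of_le_of_lt h hi) ?_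
  refine (Set.finite_lt_nat N).subset ?_
  intro i hi
  by_contra hc
  have := hN i (not_lt.1 hc)
  have hi' : c < f i := hi
  omega

theorem conj_mono {f g : ℕ → ℕ} (hg : IsPartition g) (hfg : ∀ i, f i ≤ g i) (c : ℕ) :
    conj f c ≤ conj g c := by
  obtain ⟨-, N, hN⟩ := hg
  refine Set.ncard_le_ncard (fun i hi => lt_of_lt_of_le hi (hfg i)) ?_
  refine (Set.finite_lt_nat N).subset ?_
  intro i hi
  by_contra hc
  have := hN i (not_lt.1 hc)
  have hi' : c < g i := hi
  omega

/-- Shifted column positions. -/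
noncomputable def pos (f : ℕ → ℕ) (l : ℕ) (c : Fin l) : ℤ := (conj f c.1 : ℤ) - c.1

theorem pos_anti {f : ℕ → ℕ} (hf : IsPartition f) (l : ℕ) : StrictAnti (pos f l) := by
  intro i j hij
  have := conj_anti hf (show i.1 ≤ j.1 from hij.le)
  have h2 : i.1 < j.1 := hij
  unfold pos
  omega

theorem pos_lt {f : ℕ → ℕ} (hf : IsPartition f) {l d : ℕ}
    (hw : conj f 0 ≤ conj f (l - 1) + d) (i j : Fin l) : pos f l i - pos f l j < d + l := by
  have h1 := conj_anti hf (Nat.zero_le i.1)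
  have h2 := conj_anti hf (show j.1 ≤ l - 1 by omega)
  unfold pos
  omega

theorem small_dvd {l : ℕ} {b : Fin l → ℤ} {D : ℤ} (hb : StrictAnti b) (hbD : ∀ i j, b i - b j < D)
    (i j : Fin l) (h : D ∣ b i - b j) : i = j := by
  have h1 := hbD i j
  have h2 := hbD j i
  have : b i - b j = 0 := by
    apply Int.eq_zero_of_abs_lt_dvd h
    rw [abs_lt]
    constructor <;> linarith
  exact hb.injective (by linarith)

variable {Q : Type*} [PartialOrder Q]

theorem adj_noflaw {l : ℕ} (h31 : ThreePlusOneFree Q) {L : Fin l → List Q} (hL : ChainL L)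
    {b : Fin l → ℤ} {D : ℤ} (hb : ∀ i j, D ∣ b i - b j → i = j)
    (pr : Fin l → Fin l) (g : Fin l → ℕ) (hg : ∀ j, 0 < g j)
    (hbg : ∀ j, D ∣ b (pr j) - b j - g j)
    (hmin : ∀ i j (x : ℕ), 0 < x → D ∣ b i - b j - x → g j ≤ x)
    (adj : ∀ j v s t, v + g j = s + 1 → (L j)[s]? = some t →
      ∃ z, (L (pr j))[v]? = some z ∧ ¬ t < z) : ¬ ∃ φ, Flaw b D L φ := by
  have main : ∀ n : ℕ, ∀ φ : FD Q l, φ.r + 1 - φ.w = n → ¬ Flaw b D L φ := by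
    intro n
    induction n using Nat.strong_induction_on with
    | _ n ih =>
      rintro ⟨i, j, w, r, t⟩ hn ⟨f1, f2, f3, f4⟩
      simp only at hn f1 f2 f3 f4
      have hgx : g j ≤ r + 1 - w := by
        apply hmin i j _ (by omega)
        have : ((r + 1 - w : ℕ) : ℤ) = r + 1 - w := by omega
        rw [this]
        convert f2 using 1
        ring
      have hgj := hg j
      obtain ⟨v, hv⟩ : ∃ v, v + g j = r + 1 := ⟨r + 1 - g j, by omega⟩
      obtain ⟨z, hz, hzt⟩ := adj j v r t hv f3
      have hwv : w ≤ v := by omega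
      have hdv : D ∣ b i + w - (b (pr j) + v) := by
        have h1 := Int.dvd_sub f2 (hbg j)
        convert h1 using 1
        have : (v : ℤ) + g j = r + 1 := by exact_mod_cast hv
        linarith
      rcases hwv.lt_or_eq with hlt | heq
      · obtain ⟨y, hy⟩ := exists_get hz (Nat.sub_le v 1)
        by_cases hf : Flaw b D L ⟨i, pr j, w, v - 1, y⟩
        · exact ih (v - 1 + 1 - w) (by omega) _ rfl hf
        have : ∃ z', (L i)[w]? = some z' ∧ ¬ y < z' := by
          by_contra hc
          push Not at hc
          apply hf
          refine ⟨by simp only; omega, ?_, hy, hc⟩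
          simp only
          have : ((v - 1 : ℕ) : ℤ) = v - 1 := by omega
          rw [this]
          convert hdv using 1
          ring
        obtain ⟨z', hz', hyz'⟩ := this
        obtain ⟨x, hx⟩ := exists_get f3 (Nat.sub_le r 1)
        obtain ⟨y', hy', hxy⟩ := adj j (v - 1) (r - 1) x (by omega) hx
        rw [hy] at hy'
        cases hy'
        exact three_chain h31 (hL.lt hx f3 (by omega)) (f4 z' hz') hyz' hxy
      · subst heq
        have : i = pr j := hb _ _ (by convert hdv using 1; ring)
        subst this
        exact hzt (f4 z hz)
  rintro ⟨φ, hφ⟩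
  exact main _ φ rfl hφ

theorem noflaw_adj {l : ℕ} {L : Fin l → List Q} 
    {b : Fin l → ℤ} {D : ℤ} (hn : ¬ ∃ φ, Flaw b D L φ) {i j : Fin l} {v s : ℕ} {t z : Q}
    (hvs : v ≤ s) (hd : D ∣ (b i + v) - (b j + s + 1)) (ht : (L j)[s]? = some t)
    (hz : (L i)[v]? = some z) : ¬ t < z := by
  intro hlt
  apply hn
  refine ⟨⟨i, j, v, s, t⟩, hvs, hd, ht, ?_⟩
  intro z' hz'
  simp only at hz' ⊢
  rw [hz] at hz'
  cases hz'
  exact hlt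

theorem get_ofFn {n m : ℕ} {x : Q} (T : Fin n → Q) :
    (List.ofFn T)[m]? = some x ↔ ∃ h : m < n, T ⟨m, h⟩ = x := by
  rw [List.getElem?_ofFn]
  split_ifs with h
  · simp [h]
  · simp [h]

theorem count_ofFn' {n : ℕ} {x : Q} (T : Fin n → Q) :
    (List.ofFn T).count x = (Finset.univ.filter (fun p => T p = x)).card := by
  rw [← Multiset.coe_count, Finset.card_def, Finset.filter_val]
  have : (↑(List.ofFn T) : Multiset Q) = (Finset.univ : Finset (Fin n)).val.map T := by
    simp [List.ofFn_eq_map, Fin.univ_val_map]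
  rw [this, Multiset.count_map]
  congr 1
  apply Multiset.filter_congr
  intros
  exact eq_comm

variable {lam mu : ℕ → ℕ} {d : ℕ}

theorem tab_noflaw (h31 : ThreePlusOneFree Q) (hs : IsCylShape lam mu d)
    (T : ∀ c : Fin (lam 0), Fin (conj lam c - conj mu c) → Q) (hT : IsCylTab lam mu d T) :
    ¬ ∃ φ, Flaw (pos mu (lam 0)) ((d : ℤ) + (lam 0 : ℕ)) (fun c => List.ofFn (T c)) φ := by
  obtain ⟨hl, hm, hml, h0, hw1, hw2, -⟩ := hs
  obtain ⟨-, -, -, hcol, hrow, hwrap⟩ := hT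
  have hanti := pos_anti hm (lam 0)
  have hbD := pos_lt hm hw2
  have hL : ChainL (fun c => List.ofFn (T c)) := by
    intro c
    rw [List.pairwise_ofFn]
    intro p q hpq
    exact hcol c p q hpq
  set last : Fin (lam 0) := ⟨lam 0 - 1, Nat.sub_lt h0 Nat.one_pos⟩ with hlast
  let pr : Fin (lam 0) → Fin (lam 0) := fun j => if j.1 = 0 then last else ⟨j.1 - 1, by omega⟩
  let gz : Fin (lam 0) → ℤ := fun j => if j.1 = 0 then pos mu (lam 0) last - pos mu (lam 0) j + (d + (lam 0 : ℕ))
    else pos mu (lam 0) (pr j) - pos mu (lam 0) j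
  have hgz : ∀ j, 0 < gz j := by
    intro j
    simp only [gz]
    split_ifs with h
    · have := hbD j last
      omega
    · have : pr j < j := by
        simp only [pr, if_neg h, Fin.lt_def]; omega
      have := hanti this
      omega
  have hgn : ∀ j, (((gz j).toNat : ℕ) : ℤ) = gz j := fun j => Int.toNat_of_nonneg (hgz j).le
  refine adj_noflaw h31 hL (small_dvd hanti hbD) pr (fun j => (gz j).toNat) ?_ ?_ ?_ ?_
  · intro j
    have := hgz j
    omega
  · intro j
    simp only [hgn]
    simp only [gz]
    split_ifs with h
    · simp only [pr, if_pos h]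
      exact ⟨-1, by ring⟩
    · exact ⟨0, by ring⟩
  · intro i j x hx ⟨k, hk⟩
    zify
    rw [hgn]
    simp only [gz]
    set D : ℤ := (d : ℤ) + (lam 0 : ℕ) with hDdef
    have hDpos : 0 < D := by omega
    set b := pos mu (lam 0) with hbdef
    have hlast_le : b last ≤ b i := hanti.antitone (by rw [Fin.le_def]; simp [hlast]; omega)
    have hk1 : b i ≤ b j → k ≤ -1 := by
      intro hij
      by_contra hc
      have : 0 ≤ D * k := mul_nonneg hDpos.le (by omega)
      omega
    have hk2 : k ≤ -1 → b i - b j + D ≤ x := by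
      intro h
      have : D * k ≤ D * (-1) := mul_le_mul_of_nonneg_left h hDpos.le
      omega
    split_ifs with h
    · have hj : b i ≤ b j := hanti.antitone (by rw [Fin.le_def]; omega)
      have := hk2 (hk1 hj)
      omega
    · rcases lt_or_ge i j with hij | hij
      · have h1 : b (pr j) ≤ b i := hanti.antitone (by
          rw [Fin.le_def]; simp only [pr, if_neg h]
          have : i.1 < j.1 := hij
          omega)
        have hk0 : k ≤ 0 := by
          by_contra hc
          have : D * 1 ≤ D * k := mul_le_mul_of_nonneg_left (by omega) hDpos.le
          have := hbD i j
          omega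
        have : D * k ≤ 0 := mul_nonpos_of_nonneg_of_nonpos hDpos.le hk0
        omega
      · have := hk2 (hk1 (hanti.antitone hij))
        have := hbD (pr j) i
        omega
  · intro j v s t hvs ht
    obtain ⟨hsl, rfl⟩ := (get_ofFn _).1 ht
    have hvs' : (v : ℤ) + gz j = s + 1 := by
      rw [← hgn]; exact_mod_cast hvs
    simp only [gz] at hvs'
    split_ifs at hvs' with h
    · have hj0 : j = ⟨0, h0⟩ := Fin.ext h
      subst hj0
      have e : conj mu (lam 0 - 1) + v + d = conj mu 0 + s := by
        simp only [pos, hlast] at hvs'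
        omega
      have hvl : v < conj lam (lam 0 - 1) - conj mu (lam 0 - 1) := by
        simp only at hsl
        omega
      have hpr : pr ⟨0, h0⟩ = last := by simp [pr]
      rw [hpr]
      exact ⟨_, (get_ofFn _).2 ⟨hvl, rfl⟩, hwrap h0 ⟨v, hvl⟩ ⟨s, hsl⟩ e⟩
    · obtain ⟨c, hc⟩ : ∃ c, j.1 = c + 1 := ⟨j.1 - 1, by omega⟩
      obtain ⟨j, hj⟩ := j
      simp only at hc
      subst hc
      have hpr : pr ⟨c + 1, hj⟩ = ⟨c, by omega⟩ := by simp [pr]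
      rw [hpr] at hvs' ⊢
      have e : conj mu c + v = conj mu (c + 1) + s := by
        simp only [pos] at hvs'
        omega
      have hvl : v < conj lam c - conj mu c := by
        simp only at hsl
        have := conj_anti hl (Nat.le_succ c)
        have : conj lam (c + 1) ≤ conj lam c := this
        omega
      exact ⟨_, (get_ofFn _).2 ⟨hvl, rfl⟩, hrow ⟨c, by omega⟩ hj ⟨v, hvl⟩ ⟨s, hsl⟩ e⟩

theorem noflaw_tab (hs : IsCylShape lam mu d)
    (T : ∀ c : Fin (lam 0), Fin (conj lam c - conj mu c) → Q)
    (hL : ChainL (fun c => List.ofFn (T c)))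
    (hn : ¬ ∃ φ, Flaw (pos mu (lam 0)) ((d : ℤ) + (lam 0 : ℕ)) (fun c => List.ofFn (T c)) φ) :
    IsCylTab lam mu d T := by
  obtain ⟨hl, hm, hml, h0, hw1, hw2, -⟩ := hs
  refine ⟨fun c _ => ⟨conj_anti hl (Nat.le_succ c), conj_anti hm (Nat.le_succ c)⟩,
    fun c _ => conj_mono hl hml c, fun _ => ⟨hw1, hw2⟩, ?_, ?_, ?_⟩
  · intro c p q hpq
    exact hL.lt (c := c) ((get_ofFn _).2 ⟨p.2, rfl⟩) ((get_ofFn _).2 ⟨q.2, rfl⟩) hpq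
  · intro c hc p q e
    have := conj_anti hm (Nat.le_succ c.1)
    have : conj mu (c.1 + 1) ≤ conj mu c.1 := this
    refine noflaw_adj hn (i := c) (j := ⟨c.1 + 1, hc⟩) (v := p.1) (s := q.1) (by omega) ?_
      ((get_ofFn _).2 ⟨q.2, rfl⟩) ((get_ofFn _).2 ⟨p.2, rfl⟩)
    refine ⟨0, ?_⟩
    simp only [pos]
    push_cast
    omega
  · intro h0 p q e
    refine noflaw_adj hn (i := ⟨lam 0 - 1, Nat.sub_lt h0 Nat.one_pos⟩) (j := ⟨0, h0⟩)
      (v := p.1) (s := q.1) (by omega) ?_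
      ((get_ofFn _).2 ⟨q.2, rfl⟩) ((get_ofFn _).2 ⟨p.2, rfl⟩)
    refine ⟨-1, ?_⟩
    simp only [pos]
    have : ((lam 0 - 1 : ℕ) : ℤ) = (lam 0 : ℤ) - 1 := by omega
    rw [this]
    push_cast
    omega

/-- Jacobi–Trudi type identity. -/
theorem jacobi_trudi [Fintype Q] (h31 : ThreePlusOneFree Q) (hs : IsCylShape lam mu d) (f : Q → ℕ)
    (hf : (∑ col : Fin (lam 0), (conj lam col.1 - conj mu col.1)) = ∑ q, f q) :
    ∑ s ∈ (good_finite (pos mu (lam 0)) (pos lam (lam 0)) ((d : ℤ) + (lam 0 : ℕ)) f).toFinset,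
        ((Equiv.Perm.sign s.2 : ℤˣ) : ℤ)
      = Nat.card {T : ∀ col : Fin (lam 0), Fin (conj lam col - conj mu col) → Q //
          IsCylTab lam mu d T ∧ ∀ x, tabCount lam mu T x = f x} := by
  have hs' := hs
  obtain ⟨hl, hm, hml, h0, hw1, hw2, -⟩ := hs'
  have hends : ∀ s, Good (pos mu (lam 0)) (pos lam (lam 0)) ((d : ℤ) + (lam 0 : ℕ)) f s →
      (¬ ∃ φ, Flaw (pos mu (lam 0)) ((d : ℤ) + (lam 0 : ℕ)) s.1 φ) →
      s.2 = 1 ∧ ∀ c, pos mu (lam 0) c + (s.1 c).length = pos lam (lam 0) c := by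
    intro s hg hn
    refine noflaw_ends (by omega) (pos_anti hm _) (pos_anti hl _) (pos_lt hm hw2) (pos_lt hl hw1)
      hg.2.1 ?_ hn
    have h1 : ∑ c, (s.1 c).length = ∑ col : Fin (lam 0), (conj lam col.1 - conj mu col.1) := by
      rw [hf]
      simp_rw [← hg.2.2]
      rw [Finset.sum_comm]
      apply Finset.sum_congr rfl
      intro c _
      have := Multiset.sum_count_eq_card (s := Finset.univ) (m := (↑(s.1 c) : Multiset Q)) (by simp)
      simpa using this.symm
    rw [Finset.sum_add_distrib, ← Nat.cast_sum, h1, Nat.cast_sum, ← Finset.sum_add_distrib]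
    apply Finset.sum_congr rfl
    intro c _
    have := conj_mono hl hml c.1
    simp only [pos]
    omega
  rw [core_sum h31 _ _ _ _ (small_dvd (pos_anti hm _) (pos_lt hm hw2))
    (fun s hg hn => (hends s hg hn).1)]
  congr 1
  symm
  refine Nat.card_congr (Equiv.ofBijective (fun T => ⟨(fun c => List.ofFn (T.1 c), 1), ?_, ?_⟩) ⟨?_, ?_⟩)
  · obtain ⟨T, hT, hc⟩ := T
    refine ⟨?_, ?_, ?_⟩
    · intro c
      rw [List.pairwise_ofFn]
      intro p q hpq
      exact hT.2.2.2.1 c p q hpq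
    · intro c
      refine ⟨0, ?_⟩
      have := conj_mono hl hml c.1
      simp [pos]
      omega
    · intro q
      rw [← hc q]
      simp only [tabCount, count_ofFn']
  · exact tab_noflaw h31 hs T.1 T.2.1
  · rintro ⟨T, hT⟩ ⟨T', hT'⟩ h
    simp only [Subtype.mk.injEq, Prod.mk.injEq, and_true] at h
    apply Subtype.ext
    funext c
    exact List.ofFn_injective (congrFun h c)
  · rintro ⟨⟨L, π⟩, hg, hn⟩
    obtain ⟨e1, e2⟩ := hends _ hg hn
    simp only at e1 e2
    have hlen : ∀ c : Fin (lam 0), (L c).length = conj lam c - conj mu c := by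
      intro c
      have := e2 c
      simp only [pos] at this
      omega
    let T : ∀ c : Fin (lam 0), Fin (conj lam c - conj mu c) → Q :=
      fun c p => (L c)[p.1]'(by rw [hlen]; exact p.2)
    have hTL : (fun c => List.ofFn (T c)) = L := by
      funext c
      apply List.ext_getElem
      · simp [hlen]
      · intro m h1 h2
        simp [T]
    subst e1
    refine ⟨⟨T, ?_, ?_⟩, ?_⟩
    · apply noflaw_tab hs
      · rw [hTL]; exact hg.1
      · rw [hTL]; exact hn
    · intro x
      rw [← hg.2.2 x]
      simp only [tabCount, ← count_ofFn']
      simp only [← hTL]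
    · apply Subtype.ext
      simp only [hTL]

end TabProof
section PolyProof

theorem prod_X_pow_fin {σ : Type*} [Fintype σ] (m : σ →₀ ℕ) :
    ∏ x, (X x : MvPolynomial σ ℤ) ^ m x = monomial m 1 := by
  rw [monomial_eq, Finsupp.prod_fintype _ _ (fun _ => pow_zero _)]
  simp

variable {Q : Type*} [Fintype Q] [PartialOrder Q] {l : ℕ}

/-- Families of sets of columns, with chain fibers. -/
def RP (f : Q → ℕ) (R : Q → Finset (Fin l)) : Prop :=
  (∀ c x y, c ∈ R x → c ∈ R y → x ≤ y ∨ y ≤ x) ∧ ∀ x, (R x).card = f x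

noncomputable def GP (l : ℕ) (f : Q → ℕ) : MvPolynomial (Fin l) ℤ :=
  ∑ R ∈ Finset.univ.filter (fun R : Q → Finset (Fin l) => RP f R), ∏ x, ∏ c ∈ R x, X c

noncomputable def val (b a : Fin l → ℤ) (D : ℤ) (m : Fin l →₀ ℕ) : ℤ :=
  ∑ π : Equiv.Perm (Fin l), if (∀ c, D ∣ b c + m c - a (π c)) then ((Equiv.Perm.sign π : ℤˣ) : ℤ) else 0

noncomputable def Phi (b a : Fin l → ℤ) (D : ℤ) : MvPolynomial (Fin l) ℤ →ₗ[ℤ] ℤ :=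
  (MvPolynomial.basisMonomials (Fin l) ℤ).constr ℤ (val b a D)

theorem Phi_monomial (b a : Fin l → ℤ) (D : ℤ) (m : Fin l →₀ ℕ) :
    Phi b a D (monomial m 1) = val b a D m := by
  have := (MvPolynomial.basisMonomials (Fin l) ℤ).constr_basis ℤ (val b a D) m
  simpa [Phi] using this

noncomputable def mR (R : Q → Finset (Fin l)) : Fin l →₀ ℕ :=
  Finsupp.equivFunOnFinite.symm (fun c => (Finset.univ.filter (fun x => c ∈ R x)).card)

theorem prod_R (R : Q → Finset (Fin l)) :
    (∏ x, ∏ c ∈ R x, X c : MvPolynomial (Fin l) ℤ) = monomial (mR R) 1 := by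
  rw [← prod_X_pow_fin, Finset.prod_comm' (t' := Finset.univ)
    (s' := fun c => Finset.univ.filter (fun x => c ∈ R x)) (by simp)]
  simp [mR]

theorem exists_sorted (S : Finset Q) (hS : ∀ x ∈ S, ∀ y ∈ S, x ≤ y ∨ y ≤ x) :
    ∃ L : List Q, L.Pairwise (· < ·) ∧ ∀ x, x ∈ L ↔ x ∈ S := by
  obtain ⟨ρ, hρ⟩ := exists_rho (Q := Q)
  induction S using Finset.induction_on_max_value ρ with
  | empty => exact ⟨[], by simp, by simp⟩
  | insert a s ha hmax ih =>
    obtain ⟨L, h1, h2⟩ := ih (fun x hx y hy => hS x (Finset.mem_insert_of_mem hx) y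
      (Finset.mem_insert_of_mem hy))
    refine ⟨L ++ [a], ?_, ?_⟩
    · rw [List.pairwise_append]
      refine ⟨h1, by simp, ?_⟩
      intro x hx y hy
      rw [List.mem_singleton] at hy
      subst hy
      have hxs := (h2 x).1 hx
      have hne : x ≠ y := fun e => ha (e ▸ hxs)
      rcases hS x (Finset.mem_insert_of_mem hxs) y (Finset.mem_insert_self _ _) with h | h
      · exact lt_of_le_of_ne h hne
      · have := hρ (lt_of_le_of_ne h hne.symm)
        have := hmax x hxs
        omega
    · intro x
      simp [h2, or_comm]

theorem sorted_unique {L L' : List Q} (h : L.Pairwise (· < ·)) (h' : L'.Pairwise (· < ·))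
    (e : ∀ x, x ∈ L ↔ x ∈ L') : L = L' := by
  have hn : L.Nodup := h.imp (fun h => h.ne)
  have hn' : L'.Nodup := h'.imp (fun h => h.ne)
  have hp : L.Perm L' := (List.perm_ext_iff_of_nodup hn hn').2 e
  exact hp.eq_of_pairwise (fun a b _ _ h1 h2 => absurd (h1.trans h2) (lt_irrefl _)) h h'

theorem Phi_GP (b a : Fin l → ℤ) (D : ℤ) (f : Q → ℕ) :
    Phi b a D (GP l f) = ∑ s ∈ (good_finite b a D f).toFinset, ((Equiv.Perm.sign s.2 : ℤˣ) : ℤ) := by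
  have h1 : Phi b a D (GP l f) = ∑ p ∈ (Finset.univ : Finset ((Q → Finset (Fin l)) × Equiv.Perm (Fin l))).filter
      (fun p => RP f p.1 ∧ ∀ c, D ∣ b c + mR p.1 c - a (p.2 c)), ((Equiv.Perm.sign p.2 : ℤˣ) : ℤ) := by
    rw [GP, map_sum]
    simp_rw [prod_R, Phi_monomial, val]
    rw [Finset.sum_filter, Finset.sum_filter, Fintype.sum_prod_type]
    apply Finset.sum_congr rfl
    intro R _
    by_cases hR : RP f R <;> simp [hR]
  rw [h1]
  symm
  refine Finset.sum_nbij (fun s => (fun x => Finset.univ.filter (fun c => x ∈ s.1 c), s.2)) ?_ ?_ ?_ ?_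
  · intro s hs
    simp only [Set.Finite.mem_toFinset, Set.mem_ofPred_eq] at hs
    obtain ⟨g1, g2, g3⟩ := hs
    have hnd : ∀ c, (s.1 c).Nodup := fun c => (g1 c).imp (fun h => h.ne)
    simp only [Finset.mem_filter, Finset.mem_univ, true_and]
    refine ⟨⟨?_, ?_⟩, ?_⟩
    · intro c x y hx hy
      simp only [Finset.mem_filter, Finset.mem_univ, true_and] at hx hy
      obtain ⟨m, hm⟩ := List.getElem?_of_mem hx
      obtain ⟨m', hm'⟩ := List.getElem?_of_mem hy
      rcases le_total m m' with h | h
      · exact Or.inl (g1.le hm hm' h)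
      · exact Or.inr (g1.le hm' hm h)
    · intro x
      rw [← g3 x, Finset.card_filter]
      apply Finset.sum_congr rfl
      intro c _
      split_ifs with h
      · exact (List.count_eq_one_of_mem (hnd c) h).symm
      · exact (List.count_eq_zero_of_not_mem h).symm
    · intro c
      have : mR (fun x => Finset.univ.filter (fun c => x ∈ s.1 c)) c = (s.1 c).length := by
        simp only [mR, Finsupp.equivFunOnFinite_symm_apply_apply, Finset.mem_filter, Finset.mem_univ, true_and]
        rw [← List.toFinset_card_of_nodup (hnd c)]
        congr 1
        ext x
        simp
      rw [this]
      exact g2 c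
  · intro s hs s' hs' he
    simp only [Set.Finite.coe_toFinset, Set.mem_ofPred_eq] at hs hs'
    simp only [Prod.mk.injEq] at he
    apply Prod.ext _ he.2
    funext c
    apply sorted_unique (hs.1 c) (hs'.1 c)
    intro x
    have := Finset.ext_iff.1 (congrFun he.1 x) c
    simpa using this
  · rintro ⟨R, π⟩ hR
    simp only [Finset.coe_filter, Finset.mem_univ, true_and, Set.mem_ofPred_eq] at hR
    obtain ⟨⟨h1, h2⟩, h3⟩ := hR
    have hex : ∀ c, ∃ L : List Q, L.Pairwise (· < ·) ∧ ∀ x, x ∈ L ↔ x ∈ Finset.univ.filter (fun x => c ∈ R x) := by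
      intro c
      apply exists_sorted
      intro x hx y hy
      exact h1 c x y (by simpa using hx) (by simpa using hy)
    choose L hL1 hL2 using hex
    have hnd : ∀ c, (L c).Nodup := fun c => (hL1 c).imp (fun h => h.ne)
    have hRL : (fun x => Finset.univ.filter (fun c => x ∈ L c)) = R := by
      funext x
      ext c
      simp [hL2]
    refine ⟨(L, π), ?_, ?_⟩
    · simp only [Set.Finite.coe_toFinset, Set.mem_ofPred_eq]
      refine ⟨hL1, ?_, ?_⟩
      · intro c
        have : (L c).length = mR R c := by
          simp only [mR, Finsupp.equivFunOnFinite_symm_apply_apply]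
          rw [← List.toFinset_card_of_nodup (hnd c)]
          congr 1
          ext x
          simp [hL2]
        simp only [this]
        exact h3 c
      · intro q
        rw [← h2 q, ← hRL, Finset.card_filter]
        apply Finset.sum_congr rfl
        intro c _
        split_ifs with h
        · exact List.count_eq_one_of_mem (hnd c) h
        · exact List.count_eq_zero_of_not_mem h
    · simp only [hRL]
  · intro s _
    rfl

theorem chrom_eq_GP (l : ℕ) : chromPoly Q l = GP l (fun _ : Q => 1) := by
  unfold chromPoly GP
  refine Finset.sum_nbij (fun κ x => {κ x}) ?_ ?_ ?_ ?_
  · intro κ hκ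
    simp only [Finset.mem_filter, Finset.mem_univ, true_and] at hκ ⊢
    refine ⟨?_, by simp⟩
    intro c x y hx hy
    rw [Finset.mem_singleton] at hx hy
    by_contra hc
    have hne : x ≠ y := fun e => hc (Or.inl e.le)
    exact hκ x y hne hc (hx.symm.trans hy)
  · intro κ _ κ' _ h
    funext x
    have := congrFun h x
    simpa using this
  · intro R hR
    simp only [Finset.coe_filter, Finset.mem_univ, true_and, Set.mem_ofPred_eq] at hR
    obtain ⟨h1, h2⟩ := hR
    have : ∀ x, ∃ c, R x = {c} := fun x => Finset.card_eq_one.1 (h2 x)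
    choose κ hκ using this
    refine ⟨κ, ?_, ?_⟩
    · simp only [Finset.coe_filter, Finset.mem_univ, true_and, Set.mem_ofPred_eq]
      intro x y _ hn he
      exact hn (h1 (κ x) x y (by simp [hκ]) (by simp [hκ, he]))
    · funext x
      exact (hκ x).symm
  · intro κ _
    simp

theorem esymm_eq_GP (l N : ℕ) (f : Fin N → ℕ) :
    ∏ x, esymm (Fin l) ℤ (f x) = GP l f := by
  unfold GP esymm
  rw [Finset.prod_univ_sum]
  apply Finset.sum_congr _ (fun _ _ => rfl)
  ext R
  rw [Fintype.mem_piFinset, Finset.mem_filter]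
  simp only [Finset.mem_powersetCard, Finset.subset_univ, true_and]
  exact ⟨fun h => ⟨@Finset.mem_univ _ (_) R, fun c x y _ _ => le_total x y, h⟩, fun h => h.2.2⟩

theorem esymmPart_ofSym (l n N : ℕ) (s : Sym (Fin N) n) :
    esymmPart (Fin l) ℤ (Nat.Partition.ofSym s) = ∏ x, esymm (Fin l) ℤ (s.1.count x) := by
  have : esymmPart (Fin l) ℤ (Nat.Partition.ofSym s) = ∏ x ∈ s.1.toFinset, esymm (Fin l) ℤ (s.1.count x) := by
    simp [esymmPart, Nat.Partition.ofSym, Finset.prod, Function.comp_def]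
  rw [this]
  apply Finset.prod_subset (Finset.subset_univ _)
  intro x _ hx
  rw [Multiset.mem_toFinset] at hx
  rw [Multiset.count_eq_zero_of_notMem hx, esymm_zero]

theorem prod_map_X {N : ℕ} (s : Multiset (Fin N)) :
    (s.map (X : Fin N → MvPolynomial (Fin N) ℤ)).prod = monomial (Multiset.toFinsupp s) 1 := by
  induction s using Multiset.induction with
  | empty => simp
  | cons a s ih =>
    rw [Multiset.map_cons, Multiset.prod_cons, ih, X, monomial_mul, ← Multiset.singleton_add, map_add,
      Multiset.toFinsupp_singleton, one_mul]

theorem coeff_msymm {n N : ℕ} (s : Sym (Fin N) n) (μ : n.Partition) :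
    coeff (Multiset.toFinsupp s.1) (msymm (Fin N) ℤ μ) = if Nat.Partition.ofSym s = μ then 1 else 0 := by
  unfold msymm
  rw [coeff_sum]
  simp_rw [prod_map_X, coeff_monomial]
  split_ifs with h
  · rw [Finset.sum_eq_single ⟨s, h⟩]
    · simp
    · intro t _ ht
      rw [if_neg]
      intro e
      exact ht (Subtype.ext (Subtype.ext (Multiset.toFinsupp.injective e)))
    · simp
  · apply Finset.sum_eq_zero
    intro t _
    rw [if_neg]
    intro e
    have : t.1 = s := Subtype.ext (Multiset.toFinsupp.injective e)
    exact h (this ▸ t.2)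

theorem exists_sym {n : ℕ} (ν : n.Partition) : ∃ s : Sym (Fin n) n, Nat.Partition.ofSym s = ν := by
  set pl := ν.parts.toList with hpl
  have hpos : ∀ p ∈ pl, 0 < p := fun p hp => ν.parts_pos (by simpa [hpl] using hp)
  have hsum : pl.sum = n := by
    rw [hpl, Multiset.sum_toList, ν.parts_sum]
  have hlen : pl.length ≤ n := by
    rw [← hsum]
    exact List.length_le_sum_of_one_le _ (fun p hp => hpos p hp)
  let f : Fin n → ℕ := fun i => pl.getD i.1 0
  have hof : List.ofFn f = pl ++ List.replicate (n - pl.length) 0 := by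
    apply List.ext_getElem
    · simp; omega
    · intro i h1 h2
      simp only [List.getElem_ofFn, f]
      rw [List.getElem_append]
      split_ifs with h
      · simp [h]
      · rw [List.getD_eq_default _ _ (not_lt.1 h)]; simp
  have hmap : (Finset.univ : Finset (Fin n)).val.map f = (pl ++ List.replicate (n - pl.length) 0 : List ℕ) := by
    rw [← hof]; simp [Fin.univ_val_map]
  have hfs : ∑ i, f i = n := by
    rw [Finset.sum, hmap]; simp [hsum]
  let m : Multiset (Fin n) := Finsupp.toMultiset (Finsupp.equivFunOnFinite.symm f)
  have hcount : ∀ x, m.count x = f x := by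
    intro x
    simp [m, Finsupp.count_toMultiset]
  have hcard : m.card = n := by
    rw [← Multiset.sum_count_eq_card (s := Finset.univ) (by simp)]
    simp_rw [hcount]
    exact hfs
  refine ⟨⟨m, hcard⟩, ?_⟩
  apply Nat.Partition.ext
  simp only [Nat.Partition.ofSym]
  have h1 : m.dedup = (Finset.univ.filter (fun x => f x ≠ 0)).val := by
    rw [← Multiset.toFinset_val]
    congr 1
    ext x
    rw [Multiset.mem_toFinset, ← Multiset.count_ne_zero, hcount]
    simp
  have h2 : m.dedup.map (fun x => m.count x) = ν.parts := by
    simp_rw [hcount]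
    have h3 := Multiset.filter_map (p := fun k : ℕ => k ≠ 0) f (Finset.univ : Finset (Fin n)).val
    rw [hmap] at h3
    rw [h1, Finset.filter_val]
    refine h3.symm.trans ?_
    rw [← Multiset.coe_add, Multiset.filter_add, Multiset.filter_eq_self.2, Multiset.filter_eq_nil.2, add_zero]
    · simp [hpl]
    · intro x hx
      have := List.eq_of_mem_replicate (Multiset.mem_coe.1 hx)
      simp [this]
    · intro x hx
      exact (hpos x (Multiset.mem_coe.1 hx)).ne'
  exact h2

theorem uT_eq {N : ℕ} (lam mu : ℕ → ℕ) (T : ∀ c : Fin (lam 0), Fin (conj lam c - conj mu c) → Fin N) :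
    uT lam mu T = monomial (Finsupp.equivFunOnFinite.symm (tabCount lam mu T)) 1 := by
  rw [← prod_X_pow_fin]
  unfold uT
  simp only [Finsupp.equivFunOnFinite_symm_apply_apply, tabCount]
  simp_rw [← Finset.prod_pow_eq_pow_sum]
  rw [Finset.prod_comm]
  apply Finset.prod_congr rfl
  intro c _
  rw [← Finset.prod_fiberwise_of_maps_to (s := Finset.univ) (t := Finset.univ) (g := T c) (by simp)]
  apply Finset.prod_congr rfl
  intro x _
  rw [Finset.prod_congr rfl (g := fun _ => X x), Finset.prod_const]
  · congr!
  · intro p hp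
    simp only [Finset.mem_filter] at hp
    rw [hp.2]

theorem linear_31 (N : ℕ) : ThreePlusOneFree (Fin N) := by
  rintro ⟨a, b, c, x, -, -, h, -⟩
  exact h (le_total x a)

end PolyProof

/-- for a `(3+1)`-free finite poset `P` with `|P| = n` and a
cylindric shape `λ/μ/d` with `n` cells, writing `s_{λ/μ/d} = Σ_ν a_ν m_ν` and
`X_{inc(P)} = Σ_ν c^P_ν e_ν`, the sum `Σ_ν a_ν c^P_ν` equals the number of
standard cylindric `P`-tableaux of shape `λ/μ/d`; in particular it is
nonnegative. -/
theorem stmt_15 (P : Type*) [Fintype P] [PartialOrder P] (h31 : ThreePlusOneFree P)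
    (lam mu : ℕ → ℕ) (d : ℕ) (hshape : IsCylShape lam mu d)
    (hn : (∑ col : Fin (lam 0), (conj lam col.1 - conj mu col.1)) = Fintype.card P)
    (a : Nat.Partition (Fintype.card P) → ℤ)
    (ha : ∀ N, (∑ T : {T : ∀ col : Fin (lam 0),
            Fin (conj lam col - conj mu col) → Fin N // IsCylTab lam mu d T},
          uT lam mu T.1)
        = ∑ ν : Nat.Partition (Fintype.card P), C (a ν) * msymm (Fin N) ℤ ν)
    (coef : Nat.Partition (Fintype.card P) → ℤ)
    (hcoef : ∀ N, chromPoly P N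
        = ∑ ν : Nat.Partition (Fintype.card P), C (coef ν) * esymmPart (Fin N) ℤ ν) :
    (∑ ν : Nat.Partition (Fintype.card P), a ν * coef ν)
      = (Nat.card {T : ∀ col : Fin (lam 0), Fin (conj lam col - conj mu col) → P //
          IsCylTab lam mu d T ∧ IsStandardTab lam mu T} : ℤ) := by
  have hA : ∀ ν, a ν = Phi (pos mu (lam 0)) (pos lam (lam 0)) ((d : ℤ) + (lam 0 : ℕ))
      (esymmPart (Fin (lam 0)) ℤ ν) := by
    intro ν
    obtain ⟨s, hs⟩ := exists_sym ν
    have h1 := congrArg (coeff (Multiset.toFinsupp s.1)) (ha (Fintype.card P))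
    have h2 : coeff (Multiset.toFinsupp s.1) (∑ ν : Nat.Partition (Fintype.card P),
        C (a ν) * msymm (Fin (Fintype.card P)) ℤ ν) = a ν := by
      rw [coeff_sum]
      simp_rw [coeff_C_mul, coeff_msymm, hs]
      simp
    rw [h2] at h1
    rw [← h1, ← hs, esymmPart_ofSym, esymm_eq_GP, Phi_GP, jacobi_trudi (linear_31 _) hshape]
    · rw [coeff_sum]
      simp_rw [uT_eq, coeff_monomial]
      rw [Finset.sum_boole, ← Nat.card_eq_finsetCard]
      congr 1
      refine Nat.card_congr ((Equiv.subtypeEquivRight (fun T => ?_)).trans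
        (Equiv.subtypeSubtypeEquivSubtypeInter _ (fun T => ∀ x, tabCount lam mu T x = s.1.count x)))
      simp only [Finset.mem_filter, Finset.mem_univ, true_and]
      rw [DFunLike.ext_iff]
      simp
    · rw [hn, Multiset.sum_count_eq_card (by simp)]
      exact s.2.symm
  have hB := congrArg (Phi (pos mu (lam 0)) (pos lam (lam 0)) ((d : ℤ) + (lam 0 : ℕ)))
    (hcoef (lam 0))
  rw [chrom_eq_GP, Phi_GP, jacobi_trudi h31 hshape _ (by simp [hn]), map_sum] at hB
  unfold IsStandardTab
  rw [hB]
  apply Finset.sum_congr rfl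
  intro ν _
  rw [hA ν, ← smul_eq_C_mul, map_smul, smul_eq_mul, mul_comm]
end

section
/- Taking P to be the total order on the positive integers in the main theorem recovers the Jacobi–Trudi-type identity of Gessel–Krattenthaler/Postnikov: for a cylindric shape λ/μ/d, s_{λ/μ/d}(x) = Σ_{k ∈ Z^{λ_1}, Σk_i = 0} det[e_{k_i(λ_1+d) + λ'_i − μ'_j − i + j}(x)], where s_{λ/μ/d}(x) is the generating function of cylindric semistandard Young tableaux of shape λ/μ/d and e_n(x) are elementary symmetric functions (e_n = 0 for n < 0). -/
open MvPolynomial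
open scoped Classical

/-- Elementary symmetric polynomials in `N` variables with integer index,
vanishing in negative degrees. -/
noncomputable def ezN (N : ℕ) (k : ℤ) : MvPolynomial (Fin N) ℤ :=
  if 0 ≤ k then esymm (Fin N) ℤ k.toNat else 0


namespace CylJT
open Finset

/-- elementary symmetric functions, recursively -/
noncomputable def E {R : Type*} [CommRing R] (x : ℕ → R) : ℕ → ℤ → R
  | 0, m => if m = 0 then 1 else 0
  | N + 1, m => E x N m + x N * E x N (m - 1)

lemma E_ne_zero {R : Type*} [CommRing R] (x : ℕ → R) (N : ℕ) :
    ∀ m, E x N m ≠ 0 → 0 ≤ m ∧ m ≤ N := by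
  induction N with
  | zero => intro m h; simp only [E] at h; have : m = 0 := by by_contra h'; simp [h'] at h
            subst this; simp
  | succ N ih =>
    intro m h
    simp only [E] at h
    by_cases h1 : E x N m = 0
    · by_cases h2 : E x N (m - 1) = 0
      · simp [h1, h2] at h
      · have := ih _ h2; push_cast; omega
    · have := ih _ h1; push_cast; omega

/-- the open alcove -/
def Alc {L : ℕ} (n : ℤ) (p : Fin L → ℤ) : Prop :=
  (∀ i j, i < j → p j < p i) ∧ ∀ i j, p i - p j < n

/-- indicator -/
noncomputable def ind {L : ℕ} (e : Finset (Fin L)) (c : Fin L) : ℤ := if c ∈ e then 1 else 0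

section G
variable {R : Type*} [CommRing R] {L : ℕ} (x : ℕ → R) (n : ℤ) (a : Fin L → ℤ)

noncomputable def D (N : ℕ) (b k : Fin L → ℤ) : R :=
  Matrix.det (Matrix.of fun i j : Fin L => E x N (k i * n + b i - a j))

noncomputable def G (N : ℕ) (b : Fin L → ℤ) : R :=
  ∑ᶠ k : {k : Fin L → ℤ // ∑ i, k i = 0}, D x n a N b k.1

lemma D_supp (hn : 0 < n) (N : ℕ) (b : Fin L → ℤ) :
    (Function.support fun k : {k : Fin L → ℤ // ∑ i, k i = 0} => D x n a N b k.1).Finite := by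
  set B : ℤ := N + ∑ i, |b i| + ∑ i, |a i| with hB
  have h1 : (Set.Icc (fun _ : Fin L => -B) (fun _ => B)).Finite := Set.finite_Icc _ _
  refine (h1.preimage (f := fun k : {k : Fin L → ℤ // ∑ i, k i = 0} => k.1)
    (Subtype.val_injective.injOn)).subset ?_
  intro k hk
  have key : ∀ i, -B ≤ k.1 i ∧ k.1 i ≤ B := by
    intro i
    have : ∃ j, E x N (k.1 i * n + b i - a j) ≠ 0 := by
      by_contra! hcon
      exact hk (Matrix.det_eq_zero_of_row_eq_zero i hcon)
    obtain ⟨j, hj⟩ := this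
    have h2 := E_ne_zero x N _ hj
    have hb : |b i| ≤ ∑ i, |b i| :=
      Finset.single_le_sum (f := fun i => |b i|) (fun i _ => abs_nonneg _) (mem_univ i)
    have ha : |a j| ≤ ∑ i, |a i| :=
      Finset.single_le_sum (f := fun i => |a i|) (fun i _ => abs_nonneg _) (mem_univ j)
    have hb' := abs_le.1 hb
    have ha' := abs_le.1 ha
    constructor
    · by_contra! h
      nlinarith [h2.1, h2.2]
    · by_contra! h
      nlinarith [h2.1, h2.2]
  exact ⟨fun i => (key i).1, fun i => (key i).2⟩

lemma D_succ (N : ℕ) (b k : Fin L → ℤ) :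
    D x n a (N + 1) b k =
      ∑ e : Finset (Fin L), (∏ c, if c ∈ e then x N else 1) * D x n a N (b - ind e) k := by
  have := (Matrix.detRowAlternating (n := Fin L) (R := R)).toMultilinearMap.map_add_univ
    (fun i j => x N * E x N (k i * n + b i - a j - 1)) (fun i j => E x N (k i * n + b i - a j))
  have h2 : D x n a (N + 1) b k = Matrix.detRowAlternating (R := R)
     ((fun i j => x N * E x N (k i * n + b i - a j - 1)) +
       (fun i j => E x N (k i * n + b i - a j))) := by
    unfold D
    simp only [Matrix.detRowAlternating, E]
    rw [add_comm]
    rfl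
  rw [h2]
  refine this.trans ?_
  refine Finset.sum_congr rfl fun e _ => ?_
  unfold D
  rw [← Matrix.det_mul_column]
  change Matrix.det _ = _
  congr 1
  ext i j
  by_cases h : i ∈ e
  · simp only [Finset.piecewise, h, if_true, Matrix.of_apply, ind, Pi.sub_apply]
    congr 2; ring
  · simp [Finset.piecewise, h, ind]

lemma G_succ (hn : 0 < n) (N : ℕ) (b : Fin L → ℤ) :
    G x n a (N + 1) b =
      ∑ e : Finset (Fin L), (∏ c, if c ∈ e then x N else 1) * G x n a N (b - ind e) := by
  unfold G
  simp only [D_succ]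
  rw [finsum_sum_comm]
  · refine Finset.sum_congr rfl fun e _ => ?_
    rw [mul_finsum' _ _ (D_supp x n a hn N _)]
  · intro e _
    refine (D_supp x n a hn N (b - ind e)).subset ?_
    intro k hk h0
    apply hk
    simp only at h0 ⊢
    rw [h0, mul_zero]

lemma G_refl [IsDomain R] [CharZero R] (N : ℕ) (b : Fin L → ℤ) (i j : Fin L)
    (hij : i ≠ j) (m : ℤ) (h : b i = b j + m * n) : G x n a N b = 0 := by
  set g : (Fin L → ℤ) → Fin L → ℤ := fun k c =>
    k (Equiv.swap i j c) + (if c = j then m else 0) - (if c = i then m else 0) with hg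
  have gg : ∀ k, g (g k) = k := by
    intro k
    ext c
    by_cases h1 : c = i
    · subst h1; simp [hg, hij, hij.symm]
    · by_cases h2 : c = j
      · subst h2; simp [hg, hij, hij.symm]
      · simp [hg, h1, h2, Equiv.swap_apply_of_ne_of_ne]
  have gs : ∀ k, ∑ c, g k c = ∑ c, k c := by
    intro k
    simp only [hg, Finset.sum_sub_distrib, Finset.sum_add_distrib, Finset.sum_ite_eq',
      Finset.mem_univ, if_true]
    rw [Equiv.sum_comp (Equiv.swap i j) k]; ring
  let ge : {k : Fin L → ℤ // ∑ i, k i = 0} ≃ {k : Fin L → ℤ // ∑ i, k i = 0} :=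
    { toFun := fun k => ⟨g k.1, by rw [gs, k.2]⟩
      invFun := fun k => ⟨g k.1, by rw [gs, k.2]⟩
      left_inv := fun k => Subtype.ext (gg _)
      right_inv := fun k => Subtype.ext (gg _) }
  have hD : ∀ k, D x n a N b (g k) = - D x n a N b k := by
    intro k
    unfold D
    have := Matrix.det_permute (Equiv.swap i j)
      (Matrix.of fun i j : Fin L => E x N (k i * n + b i - a j))
    rw [Equiv.Perm.sign_swap hij] at this
    simp only [Units.val_neg, Units.val_one, Int.cast_neg, Int.cast_one, neg_mul, one_mul] at this
    rw [← this]
    congr 1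
    ext r s
    simp only [Matrix.of_apply, Matrix.submatrix_apply, id]
    congr 2
    by_cases h1 : r = i
    · subst h1; simp [hg, hij, h]; ring
    · by_cases h2 : r = j
      · subst h2; simp [hg, hij.symm, h]; ring
      · simp [hg, h1, h2, Equiv.swap_apply_of_ne_of_ne]
  have e1 : G x n a N b = - G x n a N b := by
    conv_lhs => unfold G
    rw [← finsum_comp_equiv ge]
    simp only [ge, Equiv.coe_fn_mk, hD]
    rw [finsum_neg_distrib]; rfl
  exact self_eq_neg.1 e1

lemma uniq (b k : Fin L → ℤ) (ha : Alc n a) (hb : Alc n b) (hk : ∑ i, k i = 0)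
    (σ : Equiv.Perm (Fin L)) (h : ∀ i, k i * n + b i = a (σ i)) (hn : 0 < n) :
    k = 0 ∧ b = a := by
  set w : Fin L → ℤ := fun i => L * k i + (σ i).1 with hw
  have wmono : ∀ i j, i < j → w i < w j := by
    intro i j hij
    have h1 := hb.1 i j hij
    have hi := h i
    have hj := h j
    have hle : k i ≤ k j := by
      by_contra! hc
      have := ha.2 (σ i) (σ j)
      nlinarith
    rcases hle.eq_or_lt with heq | hlt
    · rw [heq] at hi
      have h3 : σ i < σ j := by
        by_contra! hc
        rcases hc.eq_or_lt with h4 | h4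
        · exact hij.ne' (σ.injective h4)
        · have := ha.1 _ _ h4
          linarith
      simp only [hw, heq]
      have : ((σ i).1 : ℤ) < (σ j).1 := by exact_mod_cast h3
      linarith
    · simp only [hw]
      have h4 : ((σ i).1 : ℤ) < L := by exact_mod_cast (σ i).2
      have h5 : (0:ℤ) ≤ (σ j).1 := by positivity
      nlinarith
  have wwin : ∀ i j, w i - w j < L := by
    intro i j
    have h1 := hb.2 j i
    have hi := h i
    have hj := h j
    have hle : k i ≤ k j + 1 := by
      by_contra! hc
      have := ha.2 (σ i) (σ j)
      nlinarith
    have h4 : ((σ i).1 : ℤ) < L := by exact_mod_cast (σ i).2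
    have h5 : (0:ℤ) ≤ (σ j).1 := by positivity
    rcases hle.eq_or_lt with heq | hlt
    · rw [heq] at hi
      have h3 : σ i < σ j := by
        by_contra! hc
        rcases hc.eq_or_lt with h4 | h4
        · rw [h4] at hj
          nlinarith
        · have := ha.1 _ _ h4
          nlinarith
      simp only [hw, heq]
      have : ((σ i).1 : ℤ) < (σ j).1 := by exact_mod_cast h3
      linarith
    · simp only [hw]
      have : k i ≤ k j := by omega
      nlinarith
  rcases Nat.eq_zero_or_pos L with h0 | hL
  · subst h0
    exact ⟨Subsingleton.elim _ _, Subsingleton.elim _ _⟩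
  have up : ∀ d : ℕ, ∀ i j : Fin L, i.1 + d = j.1 → w i + d ≤ w j := by
    intro d
    induction d with
    | zero => intro i j hij; have : i = j := Fin.ext (by omega)
              subst this; simp
    | succ d ih =>
      intro i j hij
      have h1 := ih i ⟨i.1 + d, by omega⟩ rfl
      have h2 := wmono ⟨i.1 + d, by omega⟩ j (by rw [Fin.lt_def]; simp; omega)
      push_cast; omega
  have wi : ∀ i : Fin L, w i = w ⟨0, hL⟩ + i.1 := by
    intro i
    have h1 := up i.1 ⟨0, hL⟩ i (by simp)
    have h2 := up (L - 1 - i.1) i ⟨L - 1, by omega⟩ (by simp; omega)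
    have h3 := wwin ⟨L - 1, by omega⟩ ⟨0, hL⟩
    omega
  have hs : ∑ i, w i = ∑ i : Fin L, (i.1 : ℤ) := by
    simp only [hw, Finset.sum_add_distrib, ← Finset.mul_sum, hk]
    rw [Equiv.sum_comp σ (fun i : Fin L => (i.1 : ℤ))]; ring
  have hs2 : ∑ i, w i = L * w ⟨0, hL⟩ + ∑ i : Fin L, (i.1 : ℤ) := by
    rw [Finset.sum_congr rfl (fun i _ => wi i)]
    simp [Finset.sum_add_distrib]
  have hw0 : w ⟨0, hL⟩ = 0 := by
    have h1 : (L : ℤ) * w ⟨0, hL⟩ = 0 := by linarith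
    rcases mul_eq_zero.1 h1 with h2 | h2
    · omega
    · exact h2
  have fin : ∀ i, k i = 0 ∧ σ i = i := by
    intro i
    have h1 := wi i
    rw [hw0] at h1
    simp only [hw] at h1
    have h4 : ((σ i).1 : ℤ) < L := by exact_mod_cast (σ i).2
    have h5 : (0:ℤ) ≤ (σ i).1 := by positivity
    have h6 : (i.1 : ℤ) < L := by exact_mod_cast i.2
    have h7 : (0:ℤ) ≤ i.1 := by positivity
    have hk0 : k i = 0 := by
      by_contra hne
      rcases lt_or_gt_of_ne hne with h8 | h8
      · nlinarith
      · nlinarith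
    refine ⟨hk0, Fin.ext ?_⟩
    rw [hk0] at h1
    omega
  refine ⟨funext fun i => (fin i).1, funext fun i => ?_⟩
  have := h i
  rw [(fin i).1, (fin i).2] at this
  simpa using this

lemma G_zero (hn : 0 < n) (ha : Alc n a) (b : Fin L → ℤ) (hb : Alc n b) :
    G x n a 0 b = if b = a then 1 else 0 := by
  have key : ∀ k : Fin L → ℤ, ∑ i, k i = 0 → D x n a 0 b k ≠ 0 → k = 0 ∧ b = a := by
    intro k hk hne
    unfold D at hne
    rw [← Matrix.det_transpose, Matrix.det_apply] at hne
    obtain ⟨σ, -, hσ⟩ := Finset.exists_ne_zero_of_sum_ne_zero hne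
    refine uniq n a b k ha hb hk σ (fun i => ?_) hn
    by_contra hc
    apply hσ
    rw [Finset.prod_eq_zero (mem_univ i), smul_zero]
    simp only [Matrix.transpose_apply, Matrix.of_apply, E]
    rw [if_neg]
    intro h; apply hc; linarith
  unfold G
  split_ifs with h
  · rw [finsum_eq_single _ (⟨0, by simp⟩ : {k : Fin L → ℤ // ∑ i, k i = 0})]
    · subst h
      unfold D
      convert Matrix.det_one (n := Fin L) (R := R)
      ext i j
      simp only [Matrix.of_apply, E, Matrix.one_apply, Pi.zero_apply]
      refine if_congr ?_ rfl rfl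
      constructor
      · intro h
        by_contra hne
        rcases lt_or_gt_of_ne hne with h1 | h1
        · have := hb.1 _ _ h1; omega
        · have := hb.1 _ _ h1; omega
      · rintro rfl; ring
    · intro k hk
      by_contra hne
      exact hk (Subtype.ext (key k.1 k.2 hne).1)
  · rw [finsum_eq_zero_of_forall_eq_zero]
    intro k
    by_contra hne
    exact h (key k.1 k.2 hne).2

end G

section F
variable {R : Type*} [CommRing R] {L : ℕ} (x : ℕ → R) (n : ℤ) (a : Fin L → ℤ)

/-- positions of the walkers at time `t` -/
noncomputable def pos {N : ℕ} (ε : Fin N → Finset (Fin L)) (t : ℕ) (c : Fin L) : ℤ :=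
  a c + ∑ s : Fin N, if s.1 < t ∧ c ∈ ε s then 1 else 0

noncomputable def F (N : ℕ) (b : Fin L → ℤ) : R :=
  ∑ ε : Fin N → Finset (Fin L),
    if (∀ t ≤ N, Alc n (pos a ε t)) ∧ pos a ε N = b then
      ∏ s : Fin N, ∏ c, (if c ∈ ε s then x s.1 else 1) else 0

lemma F_not_alc (N : ℕ) (b : Fin L → ℤ) (hb : ¬ Alc n b) : F x n a N b = 0 := by
  unfold F
  refine Finset.sum_eq_zero fun ε _ => if_neg ?_
  rintro ⟨h1, h2⟩
  exact hb (h2 ▸ h1 N le_rfl)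

lemma pos_snoc_le {N : ℕ} (ε : Fin N → Finset (Fin L)) (e : Finset (Fin L)) (t : ℕ) (ht : t ≤ N) :
    pos a (Fin.snoc (α := fun _ => Finset (Fin L)) ε e : Fin (N + 1) → Finset (Fin L)) t
      = pos a ε t := by
  ext c
  unfold pos
  rw [Fin.sum_univ_castSucc]
  have : ¬ N < t := by omega
  simp [Fin.snoc_castSucc, this]

lemma pos_snoc_last {N : ℕ} (ε : Fin N → Finset (Fin L)) (e : Finset (Fin L)) :
    pos a (Fin.snoc (α := fun _ => Finset (Fin L)) ε e : Fin (N + 1) → Finset (Fin L)) (N + 1)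
      = pos a ε N + ind e := by
  ext c
  unfold pos
  rw [Fin.sum_univ_castSucc]
  simp only [Fin.snoc_castSucc, Fin.snoc_last, Pi.add_apply, ind, Fin.val_castSucc, Fin.val_last]
  rw [add_assoc]
  congr 1
  congr 1
  · refine Finset.sum_congr rfl fun s _ => if_congr ?_ rfl rfl
    have := s.2
    constructor
    · rintro ⟨_, h⟩; exact ⟨this, h⟩
    · rintro ⟨_, h⟩; exact ⟨by omega, h⟩
  · simp

lemma F_succ (N : ℕ) (b : Fin L → ℤ) (hb : Alc n b) :
    F x n a (N + 1) b =
      ∑ e : Finset (Fin L), (∏ c, if c ∈ e then x N else 1) * F x n a N (b - ind e) := by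
  conv_lhs => unfold F
  rw [← Equiv.sum_comp (Fin.snocEquiv (fun _ : Fin (N + 1) => Finset (Fin L))),
    Fintype.sum_prod_type]
  refine Finset.sum_congr rfl fun e _ => ?_
  unfold F
  rw [Finset.mul_sum]
  refine Finset.sum_congr rfl fun ε _ => ?_
  have hs : (Fin.snocEquiv (fun _ : Fin (N + 1) => Finset (Fin L))) (e, ε)
    = Fin.snoc (α := fun _ => Finset (Fin L)) ε e := rfl
  rw [hs, mul_ite, mul_zero]
  refine if_congr ?_ ?_ rfl
  · rw [pos_snoc_last]
    constructor
    · rintro ⟨h1, h2⟩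
      refine ⟨fun t ht => ?_, ?_⟩
      · rw [← pos_snoc_le a ε e t ht]; exact h1 t (by omega)
      · rw [← h2]; simp
    · rintro ⟨h1, h2⟩
      have h3 : pos a ε N + ind e = b := by rw [h2]; simp
      refine ⟨fun t ht => ?_, h3⟩
      rcases Nat.lt_or_ge N t with h | h
      · have : t = N + 1 := by omega
        subst this
        rw [pos_snoc_last, h3]; exact hb
      · rw [pos_snoc_le a ε e t h]; exact h1 t h
  · rw [Fin.prod_univ_castSucc, mul_comm]
    simp [Fin.snoc_castSucc, Fin.snoc_last]

lemma alc_step (hn : 0 < n) (b : Fin L → ℤ) (hb : Alc n b) (e : Finset (Fin L))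
    (h : ¬ Alc n (b - ind e)) :
    ∃ i j, i ≠ j ∧ ∃ m : ℤ, (b - ind e) i = (b - ind e) j + m * n := by
  have h01 : ∀ c, 0 ≤ ind e c ∧ ind e c ≤ 1 := by
    intro c; unfold ind; split_ifs <;> simp
  by_cases h1 : ∀ i j, i < j → (b - ind e) j < (b - ind e) i
  · have h2 : ¬ ∀ i j, (b - ind e) i - (b - ind e) j < n := fun h2 => h ⟨h1, h2⟩
    push Not at h2
    obtain ⟨i, j, hij⟩ := h2
    have hne : i ≠ j := by rintro rfl; simp at hij; omega
    refine ⟨i, j, hne, 1, ?_⟩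
    have := hb.2 i j
    have := h01 i
    have := h01 j
    simp only [Pi.sub_apply] at *
    omega
  · push Not at h1
    obtain ⟨i, j, hij, h2⟩ := h1
    refine ⟨i, j, hij.ne, 0, ?_⟩
    have := hb.1 i j hij
    have := h01 i
    have := h01 j
    simp only [Pi.sub_apply] at *
    omega

theorem F_eq_G [IsDomain R] [CharZero R] (hn : 0 < n) (ha : Alc n a) (N : ℕ) :
    ∀ b, Alc n b → F x n a N b = G x n a N b := by
  induction N with
  | zero =>
    intro b hb
    rw [G_zero x n a hn ha b hb]
    have hp : ∀ t (ε : Fin 0 → Finset (Fin L)), pos a ε t = a := by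
      intro t ε; ext c; simp [pos]
    unfold F
    simp [hp, ha, eq_comm]
  | succ N ih =>
    intro b hb
    rw [F_succ x n a N b hb, G_succ x n a hn]
    refine Finset.sum_congr rfl fun e _ => ?_
    congr 1
    by_cases h : Alc n (b - ind e)
    · exact ih _ h
    · rw [F_not_alc x n a N _ h]
      obtain ⟨i, j, hij, m, hm⟩ := alc_step n hn b hb e h
      rw [G_refl x n a N _ i j hij m hm]

end F

section Tab

lemma lt_iff_cnt {h N : ℕ} (T : Fin h → Fin N) (hT : StrictMono T) (p : Fin h) (t : ℕ) :
    (T p).1 < t ↔ p.1 < (univ.filter fun p => (T p).1 < t).card := by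
  constructor
  · intro h1
    have : Finset.Iic p ⊆ univ.filter fun p => (T p).1 < t := by
      intro q hq
      simp only [mem_Iic] at hq
      simp only [mem_filter, mem_univ, true_and]
      have : (T q).1 ≤ (T p).1 := hT.monotone hq
      omega
    have := Finset.card_le_card this
    rw [Fin.card_Iic] at this
    omega
  · intro h1
    by_contra h2
    have : (univ.filter fun p => (T p).1 < t) ⊆ Finset.Iio p := by
      intro q hq
      simp only [mem_filter, mem_univ, true_and] at hq
      rw [mem_Iio]
      by_contra h3
      have : (T p).1 ≤ (T q).1 := hT.monotone (not_lt.1 h3)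
      omega
    have := Finset.card_le_card this
    rw [Fin.card_Iio] at this
    omega

lemma pair_iff {h h' N : ℕ} (T : Fin h → Fin N) (T' : Fin h' → Fin N) (hT : StrictMono T)
    (hT' : StrictMono T') (α β : ℕ) (hβ : β ≤ α) (hh : β + h' ≤ α + h) :
    (∀ (p : Fin h) (q : Fin h'), α + p.1 = β + q.1 → ¬ T' q < T p) ↔
      ∀ t ≤ N, β + (univ.filter fun p => (T' p).1 < t).card
        ≤ α + (univ.filter fun p => (T p).1 < t).card := by
  constructor
  · intro H t ht
    by_contra! hc
    have hle : (univ.filter fun p => (T' p).1 < t).card ≤ h' := by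
      simpa using Finset.card_le_univ (univ.filter fun p => (T' p).1 < t)
    set A := (univ.filter fun p => (T p).1 < t).card with hA
    set B := (univ.filter fun p => (T' p).1 < t).card with hB
    have h1 : A < h := by omega
    have h2 : α + A - β < h' := by omega
    apply H ⟨A, h1⟩ ⟨α + A - β, h2⟩ (by simp; omega)
    have h3 := (lt_iff_cnt T' hT' ⟨α + A - β, h2⟩ t).2 (by simp only [← hB]; omega)
    have h4 := (lt_iff_cnt T hT ⟨A, h1⟩ t).not.2 (by simp only [← hA]; omega)
    rw [Fin.lt_def]; omega
  · intro H p q hpq hlt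
    have h1 := H (T p).1 (T p).2.le
    have h2 := (lt_iff_cnt T' hT' q (T p).1).1 hlt
    have h3 := (lt_iff_cnt T hT p (T p).1).not.1 (lt_irrefl _)
    omega

lemma alc_iff {L : ℕ} (hL : 0 < L) (n : ℤ) (p : Fin L → ℤ) :
    Alc n p ↔ (∀ (c : Fin L) (hc : c.1 + 1 < L), p ⟨c.1 + 1, hc⟩ < p c) ∧
      p ⟨0, hL⟩ - p ⟨L - 1, Nat.sub_lt hL Nat.one_pos⟩ < n := by
  constructor
  · intro h
    exact ⟨fun c hc => h.1 _ _ (by rw [Fin.lt_def]; simp), h.2 _ _⟩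
  · rintro ⟨h1, h2⟩
    have key : ∀ d : ℕ, ∀ i j : Fin L, i.1 + d = j.1 → p j + d ≤ p i := by
      intro d
      induction d with
      | zero => intro i j hij; have : i = j := Fin.ext (by omega)
                subst this; simp
      | succ d ih =>
        intro i j hij
        have h3 := ih i ⟨i.1 + d, by omega⟩ rfl
        have h4 := h1 ⟨i.1 + d, by omega⟩ (by simp; omega)
        have : (⟨i.1 + d + 1, by omega⟩ : Fin L) = j := Fin.ext (by simp; omega)
        simp only [this] at h4
        push_cast; omega
    refine ⟨fun i j hij => ?_, fun i j => ?_⟩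
    · have h5 : i.1 < j.1 := hij
      have := key (j.1 - i.1) i j (by omega)
      omega
    · have h3 := key i.1 ⟨0, hL⟩ i (by simp)
      have h4 := key (L - 1 - j.1) j ⟨L - 1, Nat.sub_lt hL Nat.one_pos⟩ (by simp; omega)
      omega

/-- step set of a filling -/
noncomputable def steps {L N : ℕ} {h : Fin L → ℕ} (T : ∀ c, Fin (h c) → Fin N) :
    Fin N → Finset (Fin L) := fun s => univ.filter fun c => ∃ p, T c p = s

lemma pos_steps {L N : ℕ} {h : Fin L → ℕ} (T : ∀ c, Fin (h c) → Fin N)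
    (hT : ∀ c, StrictMono (T c)) (a : Fin L → ℤ) (t : ℕ) (c : Fin L) :
    pos a (steps T) t c = a c + (univ.filter fun p => (T c p).1 < t).card := by
  unfold pos steps
  congr 1
  rw [Finset.sum_boole]
  congr 1
  rw [← Finset.card_image_of_injective _ (hT c).injective]
  congr 1
  ext s
  simp only [mem_filter, mem_univ, true_and, mem_image]
  constructor
  · rintro ⟨h1, p, rfl⟩; exact ⟨p, h1, rfl⟩
  · rintro ⟨p, h1, rfl⟩; exact ⟨h1, p, rfl⟩

lemma weight_steps {R : Type*} [CommRing R] {L N : ℕ} {h : Fin L → ℕ}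
    (T : ∀ c, Fin (h c) → Fin N)
    (hT : ∀ c, StrictMono (T c)) (y : Fin N → R) :
    ∏ c, ∏ p, y (T c p) = ∏ s : Fin N, ∏ c, (if c ∈ steps T s then y s else 1) := by
  rw [Finset.prod_comm]
  refine Finset.prod_congr rfl fun c _ => ?_
  rw [← Finset.prod_filter, ← Finset.prod_image (s := univ) (g := T c) (f := y)
    ((hT c).injective.injOn)]
  refine Finset.prod_congr ?_ fun _ _ => rfl
  ext s
  simp [steps]

lemma steps_inj {L N : ℕ} {h : Fin L → ℕ} (T T' : ∀ c, Fin (h c) → Fin N)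
    (hT : ∀ c, StrictMono (T c)) (hT' : ∀ c, StrictMono (T' c)) (he : steps T = steps T') :
    T = T' := by
  funext c
  refine (StrictMono.range_inj (hT c) (hT' c)).1 ?_
  ext s
  have : c ∈ steps T s ↔ c ∈ steps T' s := by rw [he]
  simpa [steps] using this

lemma steps_surj {L N : ℕ} {h : Fin L → ℕ} (ε : Fin N → Finset (Fin L)) (a b : Fin L → ℤ)
    (hb : ∀ c, b c = a c + h c) (hε : pos a ε N = b) :
    ∃ T : ∀ c, Fin (h c) → Fin N, (∀ c, StrictMono (T c)) ∧ steps T = ε := by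
  have hc : ∀ c, (univ.filter fun s => c ∈ ε s).card = h c := by
    intro c
    have h1 := congrFun hε c
    unfold pos at h1
    rw [hb c, Finset.sum_boole] at h1
    have h2 := add_left_cancel h1
    simp only [Fin.is_lt, true_and] at h2
    exact_mod_cast h2
  refine ⟨fun c => (univ.filter fun s => c ∈ ε s).orderEmbOfFin (hc c),
    fun c => OrderEmbedding.strictMono _, ?_⟩
  ext s c
  have := Set.ext_iff.1 (Finset.range_orderEmbOfFin (univ.filter fun s => c ∈ ε s) (hc c)) s
  rw [Set.mem_range, Finset.mem_coe, Finset.mem_filter] at this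
  simp only [steps, mem_filter, mem_univ, true_and]
  exact this.trans (by simp)

end Tab

section conj

lemma conj_fin (f : ℕ → ℕ) (hf : IsPartition f) (c : ℕ) : {i | c < f i}.Finite := by
  obtain ⟨_, N, hN⟩ := hf
  refine (Set.finite_Iio N).subset fun i hi => ?_
  by_contra h
  have := hN i (by simpa using h)
  simp [this] at hi

lemma conj_anti (f : ℕ → ℕ) (hf : IsPartition f) (c : ℕ) : conj f (c + 1) ≤ conj f c := by
  refine Set.ncard_le_ncard (fun i hi => ?_) (conj_fin f hf c)
  simp only [Set.mem_ofPred_eq] at *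
  omega

lemma conj_le (f g : ℕ → ℕ) (hg : IsPartition g) (h : ∀ i, f i ≤ g i) (c : ℕ) :
    conj f c ≤ conj g c := by
  refine Set.ncard_le_ncard (fun i hi => ?_) (conj_fin g hg c)
  have := h i
  simp only [Set.mem_ofPred_eq] at *
  omega

end conj

section elem

lemma E_esymm {R : Type*} [CommRing R] (x : ℕ → R) (N : ℕ) :
    ∀ m, E x N m = if 0 ≤ m then ((Multiset.range N).map x).esymm m.toNat else 0 := by
  induction N with
  | zero =>
    intro m
    simp only [E]
    rcases lt_trichotomy m 0 with h | h | h
    · rw [if_neg h.ne, if_neg (by omega)]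
    · subst h; simp [Multiset.esymm]
    · rw [if_neg h.ne', if_pos h.le]
      obtain ⟨k, hk⟩ : ∃ k, m.toNat = k + 1 := ⟨m.toNat - 1, by omega⟩
      simp [hk, Multiset.esymm, Multiset.powersetCard_zero_right]
  | succ N ih =>
    intro m
    simp only [E, ih]
    rcases lt_trichotomy m 0 with h | h | h
    · rw [if_neg (by omega), if_neg (by omega), if_neg (by omega)]; simp
    · subst h; simp [Multiset.esymm]
    · obtain ⟨k, hk⟩ : ∃ k, m.toNat = k + 1 := ⟨m.toNat - 1, by omega⟩
      have hk' : (m - 1).toNat = k := by omega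
      rw [if_pos h.le, if_pos (by omega), if_pos h.le, hk, hk', Multiset.range_succ,
        Multiset.map_cons]
      simp [Multiset.esymm, Multiset.powersetCard_cons, Multiset.map_map, Function.comp_def,
        Multiset.sum_map_mul_left]

lemma ezN_eq (N : ℕ) (x : ℕ → MvPolynomial (Fin N) ℤ) (hx : ∀ i : Fin N, x i.1 = X i) (m : ℤ) :
    ezN N m = E x N m := by
  rw [E_esymm, ezN, MvPolynomial.esymm_eq_multiset_esymm]
  have : (Finset.univ.val.map (X : Fin N → MvPolynomial (Fin N) ℤ))
      = (Multiset.range N).map x := by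
    have h1 : Multiset.range N = Finset.univ.val.map (fun i : Fin N => i.1) := by
      have := congrArg Finset.val (Fin.map_valEmbedding_univ (n := N))
      have h2 := congrArg Finset.val (Nat.Iio_eq_range N)
      rw [Finset.map_val] at this
      exact (this.trans h2).symm
    rw [h1, Multiset.map_map]
    simp [Function.comp_def, hx]
  rw [this]

end elem
end CylJT

open CylJT in
/-- (Gessel–Krattenthaler/Postnikov) for a cylindric shape `λ/μ/d`,
the cylindric Schur function `s_{λ/μ/d}(x)`, i.e. the generating function of
cylindric semistandard Young tableaux of shape `λ/μ/d`, equals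
`Σ_{k, Σk_i=0} det[e_{k_i(λ₁+d)+λ'_i-μ'_j-i+j}(x)]` (in any number `N` of
variables). -/
theorem stmt_19 (lam mu : ℕ → ℕ) (d : ℕ) (hshape : IsCylShape lam mu d) (N : ℕ) :
    (∑ T : {T : ∀ col : Fin (lam 0), Fin (conj lam col - conj mu col) → Fin N //
        IsCylTab lam mu d T},
      uT lam mu T.1)
    = ∑ᶠ k : {k : Fin (lam 0) → ℤ // ∑ i, k i = 0},
        Matrix.det (Matrix.of fun i j : Fin (lam 0) =>
          ezN N (k.1 i * ((lam 0 + d : ℕ) : ℤ)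
            + (conj lam i.1 : ℤ) - (conj mu j.1 : ℤ) - (i.1 : ℤ) + (j.1 : ℤ))) := by
  obtain ⟨hlam, hmu, hle, hL, hcl, hcm, -⟩ := hshape
  set n : ℤ := ((lam 0 + d : ℕ) : ℤ) with hn
  have hn0 : 0 < n := by rw [hn]; exact_mod_cast (by omega : 0 < lam 0 + d)
  set a : Fin (lam 0) → ℤ := fun c => (conj mu c.1 : ℤ) - c.1 with ha
  set b : Fin (lam 0) → ℤ := fun c => (conj lam c.1 : ℤ) - c.1 with hb
  set x : ℕ → MvPolynomial (Fin N) ℤ := fun i => if h : i < N then X ⟨i, h⟩ else 0 with hx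
  have hxi : ∀ i : Fin N, x i.1 = X i := by intro i; simp [hx]
  have hc : ∀ c, conj mu c ≤ conj lam c := conj_le mu lam hlam hle
  have alcA : Alc n a := by
    rw [alc_iff hL]
    refine ⟨fun c hc => ?_, ?_⟩
    · have := conj_anti mu hmu c.1
      simp only [ha]; push_cast; omega
    · simp only [ha, hn]; push_cast; omega
  have alcB : Alc n b := by
    rw [alc_iff hL]
    refine ⟨fun c hc => ?_, ?_⟩
    · have := conj_anti lam hlam c.1
      simp only [hb]; push_cast; omega
    · simp only [hb, hn]; push_cast; omega
  have hRHS : (∑ᶠ k : {k : Fin (lam 0) → ℤ // ∑ i, k i = 0},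
        Matrix.det (Matrix.of fun i j : Fin (lam 0) =>
          ezN N (k.1 i * n
            + (conj lam i.1 : ℤ) - (conj mu j.1 : ℤ) - (i.1 : ℤ) + (j.1 : ℤ))))
      = G x n a N b := by
    unfold G D
    refine finsum_congr fun k => ?_
    congr 2
    funext i j
    rw [ezN_eq N x hxi]
    congr 1
    simp only [ha, hb]; ring
  rw [hRHS, ← F_eq_G x n a hn0 alcA N b alcB]
  unfold F
  rw [← Finset.sum_filter]
  have hbh : ∀ c : Fin (lam 0), b c = a c + ((conj lam c.1 - conj mu c.1 : ℕ) : ℤ) := by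
    intro c
    have := hc c.1
    simp only [ha, hb]; push_cast [this]; ring
  -- the main equivalence
  have hiff : ∀ T : ∀ col : Fin (lam 0), Fin (conj lam col - conj mu col) → Fin N,
      (∀ c, StrictMono (T c)) →
      (IsCylTab lam mu d T ↔ ∀ t ≤ N, Alc n (pos a (steps T) t)) := by
    intro T hT
    obtain ⟨C, hC⟩ : ∃ C : Fin (lam 0) → ℕ → ℕ,
        ∀ c t, C c t = (Finset.univ.filter fun p => (T c p).1 < t).card := ⟨_, fun _ _ => rfl⟩
    have hpos : ∀ t c, pos a (steps T) t c = a c + C c t := by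
      intro t c
      rw [hC]
      exact pos_steps T hT a t c
    have hp : ∀ (c : Fin (lam 0)) (hc1 : c.1 + 1 < lam 0),
        (∀ (p : Fin (conj lam c.1 - conj mu c.1))
          (q : Fin (conj lam (c.1 + 1) - conj mu (c.1 + 1))),
          conj mu c.1 + p.1 = conj mu (c.1 + 1) + q.1 → ¬ T ⟨c.1 + 1, hc1⟩ q < T c p) ↔
        ∀ t ≤ N, conj mu (c.1 + 1) + C ⟨c.1 + 1, hc1⟩ t ≤ conj mu c.1 + C c t := by
      intro c hc1
      simp only [hC]
      exact pair_iff (T c) (T ⟨c.1 + 1, hc1⟩) (hT _) (hT _) (conj mu c.1) (conj mu (c.1 + 1))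
        (conj_anti mu hmu c.1) (by
          have := conj_anti lam hlam c.1
          have := hc c.1
          have := hc (c.1 + 1)
          simp only; omega)
    have hw : (∀ (p : Fin (conj lam (lam 0 - 1) - conj mu (lam 0 - 1)))
          (q : Fin (conj lam 0 - conj mu 0)),
          conj mu (lam 0 - 1) + d + p.1 = conj mu 0 + q.1 →
          ¬ T ⟨0, hL⟩ q < T ⟨lam 0 - 1, Nat.sub_lt hL Nat.one_pos⟩ p) ↔
        ∀ t ≤ N, conj mu 0 + C ⟨0, hL⟩ t ≤
          conj mu (lam 0 - 1) + d + C ⟨lam 0 - 1, Nat.sub_lt hL Nat.one_pos⟩ t := by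
      simp only [hC]
      exact pair_iff (T ⟨lam 0 - 1, Nat.sub_lt hL Nat.one_pos⟩) (T ⟨0, hL⟩) (hT _) (hT _)
        (conj mu (lam 0 - 1) + d) (conj mu 0) hcm (by
          have := hc (lam 0 - 1)
          have := hc 0
          simp only; omega)
    constructor
    · rintro ⟨-, -, -, -, h5, h6⟩ t ht
      rw [alc_iff hL]
      refine ⟨fun c hc1 => ?_, ?_⟩
      · have := (hp c hc1).1 (h5 c hc1) t ht
        rw [hpos, hpos]
        simp only [ha]; push_cast; omega
      · have := hw.1 (fun p q hpq => h6 hL p q (by omega)) t ht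
        rw [hpos, hpos]
        simp only [ha, hn]; push_cast; omega
    · intro H
      refine ⟨fun c _ => ⟨conj_anti lam hlam c, conj_anti mu hmu c⟩, fun c _ => hc c,
        fun _ => ⟨hcl, hcm⟩, fun c p q hpq => hT c hpq, fun c hc1 => ?_, fun h0 p q hpq => ?_⟩
      · refine (hp c hc1).2 fun t ht => ?_
        have := ((alc_iff hL n _).1 (H t ht)).1 c hc1
        rw [hpos, hpos] at this
        simp only [ha] at this; push_cast at this; omega
      · refine hw.2 (fun t ht => ?_) p q (by omega)
        have := ((alc_iff hL n _).1 (H t ht)).2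
        rw [hpos, hpos] at this
        simp only [ha, hn] at this; push_cast at this; omega
  have hsm : ∀ T : ∀ col : Fin (lam 0), Fin (conj lam col - conj mu col) → Fin N,
      IsCylTab lam mu d T → ∀ c, StrictMono (T c) := fun T h c p q hpq => h.2.2.2.1 c p q hpq
  have hend : ∀ T : ∀ col : Fin (lam 0), Fin (conj lam col - conj mu col) → Fin N,
      (∀ c, StrictMono (T c)) → pos a (steps T) N = b := by
    intro T hT
    funext c
    rw [pos_steps T hT, hbh c]
    simp
  refine Finset.sum_bij (fun T _ => steps T.1) ?_ ?_ ?_ ?_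
  · intro T _
    have hT := hsm T.1 T.2
    rw [Finset.mem_filter]
    exact ⟨Finset.mem_univ _, (hiff T.1 hT).1 T.2, hend T.1 hT⟩
  · intro T _ T' _ he
    exact Subtype.ext (steps_inj T.1 T'.1 (hsm _ T.2) (hsm _ T'.2) he)
  · intro ε hε
    rw [Finset.mem_filter] at hε
    obtain ⟨T, hT, rfl⟩ := steps_surj (h := fun c : Fin (lam 0) => conj lam c.1 - conj mu c.1)
      ε a b hbh hε.2.2
    exact ⟨⟨T, (hiff T hT).2 hε.2.1⟩, Finset.mem_univ _, rfl⟩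
  · intro T _
    unfold uT
    rw [weight_steps T.1 (hsm _ T.2)]
    simp only [hxi]
end
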